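/- arXiv:2404.08319 — 4 statements merged into one kernel-verified Lean document; each statement's English description precedes it below -/
import Mathlib

section
/- Let h:[a,b]→[0,∞) be a non-negative concave function with positive integral, and let α,β>0 with β≤α. Define g_α(h) = (∫_a^b t·h(t)^α dt)/(∫_a^b h(t)^α dt). Then (∫_{g_α(h)}^b h(t)^β dt)/(∫_a^b h(t)^β dt) ≥ ((β+1)/(α+2))^{β+1}. -/
/-!
Let `T x` be the fraction of the mass of `h ^ β` to the right of `x`, and `φ = T ^ (1 / (β + 1))`.
It decreases from `1` to `0`, and it is concave: `φ' = - const * (h / φ) ^ β`, where `h / φ` is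
monotone by comparing `h` with its secants on both sides of a point.

Jensen's inequality for the weight `h ^ α` bounds `φ` at the centroid from below by the
`h ^ α`-mean of `φ`, so it is enough that this mean is at least `(β + 1) / (α + 2)`. For the weight
`(1 - φ) ^ (α - β) * h ^ β` the mean is exactly that: `φ` pushes `h ^ β dt` forward to a multiple of
`u ^ β du` on `[0, 1]`, which leaves a ratio of Beta integrals. Finally `h ^ α` is this weight times
`(h / (1 - φ)) ^ (α - β)`, a nonincreasing factor because `h` is concave and nonnegative while
`1 - φ` is convex and vanishes at `a`; as `φ` is decreasing too, Chebyshev's inequality says that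
the factor can only increase the mean.
-/

open Set MeasureTheory intervalIntegral

section WeightedJensen

variable {X E : Type*} [MeasurableSpace X] {μ : Measure X} [NormedAddCommGroup E]
  [NormedSpace ℝ E] {w : X → ℝ}

lemma integrable_withDensity_ofReal_iff (hw : 0 ≤ᵐ[μ] w) (hwm : AEMeasurable w μ) {f : X → E} :
    Integrable f (μ.withDensity fun x => ENNReal.ofReal (w x)) ↔
      Integrable (fun x => w x • f x) μ := by
  rw [integrable_withDensity_iff_integrable_smul₀' hwm.ennreal_ofReal
    (ae_of_all _ fun _ => ENNReal.ofReal_lt_top)]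
  exact integrable_congr (hw.mono fun x hx => by simp only [ENNReal.toReal_ofReal hx])

lemma integral_withDensity_ofReal (hw : 0 ≤ᵐ[μ] w) (hwm : AEMeasurable w μ) (f : X → E) :
    ∫ x, f x ∂μ.withDensity (fun x => ENNReal.ofReal (w x)) = ∫ x, w x • f x ∂μ := by
  rw [integral_withDensity_eq_integral_toReal_smul₀ hwm.ennreal_ofReal
    (ae_of_all _ fun _ => ENNReal.ofReal_lt_top)]
  exact integral_congr_ae (hw.mono fun x hx => by simp only [ENNReal.toReal_ofReal hx])

variable [CompleteSpace E] {s : Set E} {φ : E → ℝ} {f : X → E}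

theorem weightedAverage_mem_hypograph_of_concaveOn (hφ : ConcaveOn ℝ s φ)
    (hφc : ContinuousOn φ s) (hs : IsClosed s) (hfs : ∀ᵐ x ∂μ, f x ∈ s) (hw : 0 ≤ᵐ[μ] w)
    (hwi : Integrable w μ) (hfi : Integrable (fun x => w x • f x) μ)
    (hφi : Integrable (fun x => w x • φ (f x)) μ) (hpos : 0 < ∫ x, w x ∂μ) :
    (∫ x, w x ∂μ)⁻¹ • ∫ x, w x • f x ∂μ ∈ s ∧
      (∫ x, w x ∂μ)⁻¹ • ∫ x, w x • φ (f x) ∂μ ≤ φ ((∫ x, w x ∂μ)⁻¹ • ∫ x, w x • f x ∂μ) := by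
  let ν := μ.withDensity fun x => ENNReal.ofReal (w x)
  have hmass : ν univ = ENNReal.ofReal (∫ x, w x ∂μ) := by
    rw [withDensity_apply _ MeasurableSet.univ, Measure.restrict_univ,
      ofReal_integral_eq_lintegral_ofReal hwi hw]
  have : IsFiniteMeasure ν := ⟨hmass ▸ ENNReal.ofReal_lt_top⟩
  have : NeZero ν := ⟨fun h0 => by simp [h0, eq_comm, hpos.not_ge] at hmass⟩
  have jensen := hφ.average_mem_hypograph hφc hs
    ((withDensity_absolutelyContinuous μ _).ae_le hfs)
    ((integrable_withDensity_ofReal_iff hw hwi.aemeasurable).2 hfi)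
    ((integrable_withDensity_ofReal_iff hw hwi.aemeasurable).2 hφi)
  simpa only [mem_ofPred_eq, average_eq, measureReal_def, hmass, ENNReal.toReal_ofReal hpos.le, ν,
    integral_withDensity_ofReal hw hwi.aemeasurable] using jensen

lemma intervalWeightedAverage_mem_hypograph_of_concaveOn {a b : ℝ} {φ w : ℝ → ℝ} (hab : a ≤ b)
    (hφ : ConcaveOn ℝ (Icc a b) φ) (hφc : ContinuousOn φ (Icc a b))
    (hw : ∀ t ∈ Icc a b, 0 ≤ w t) (hwi : IntervalIntegrable w volume a b)
    (hpos : 0 < ∫ t in a..b, w t) :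
    (∫ t in a..b, t * w t) / (∫ t in a..b, w t) ∈ Icc a b ∧
      (∫ t in a..b, φ t * w t) / (∫ t in a..b, w t) ≤
        φ ((∫ t in a..b, t * w t) / ∫ t in a..b, w t) := by
  have hmem : ∀ᵐ t ∂volume.restrict (Ioc a b), t ∈ Icc a b :=
    (ae_restrict_mem measurableSet_Ioc).mono fun _ ht => Ioc_subset_Icc_self ht
  have integrable_mul {f : ℝ → ℝ} (hf : ContinuousOn f (Icc a b)) :
      Integrable (fun t => w t * f t) (volume.restrict (Ioc a b)) :=
    (intervalIntegrable_iff_integrableOn_Ioc_of_le hab).1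
      (hwi.mul_continuousOn (by rwa [uIcc_of_le hab]))
  simp only [integral_of_le hab] at hpos ⊢
  simpa only [smul_eq_mul, mul_comm _ (w _), inv_mul_eq_div] using
    weightedAverage_mem_hypograph_of_concaveOn hφ hφc isClosed_Icc hmem (hmem.mono hw)
    ((intervalIntegrable_iff_integrableOn_Ioc_of_le hab).1 hwi) (integrable_mul continuousOn_id)
    (integrable_mul hφc) hpos

end WeightedJensen

section Concave

lemma pos_of_mem_openSegment_of_concaveOn {E : Type*} [AddCommGroup E] [Module ℝ E] {S : Set E}
    {f : E → ℝ} (hf : ConcaveOn ℝ S f) {x y z : E} (hx : x ∈ S) (hy : y ∈ S) (hfx : 0 < f x)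
    (hfy : 0 ≤ f y) (hz : z ∈ openSegment ℝ x y) : 0 < f z := by
  obtain ⟨p, q, hp, hq, hpq, rfl⟩ := hz
  calc 0 < p • f x + q • f y := add_pos_of_pos_of_nonneg (smul_pos hp hfx) (smul_nonneg hq.le hfy)
    _ ≤ f (p • x + q • y) := hf.2 hx hy hp.le hq.le hpq

variable {S : Set ℝ} {f g : ℝ → ℝ}

lemma add_slope_mul_sub_le_of_concaveOn (hf : ConcaveOn ℝ S f) {s t x : ℝ} (hs : s ∈ S)
    (ht : t ∈ S) (hsx : s ≤ x) (hxt : x ≤ t) : f t + slope f s t * (x - t) ≤ f x := by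
  rcases hxt.eq_or_lt with rfl | hxt
  · simp
  have hslope : slope f t x ≤ slope f t s :=
    hf.slope_anti ht ⟨hs, (hsx.trans_lt hxt).ne⟩ ⟨hf.1.ordConnected.out hs ht ⟨hsx, hxt.le⟩, hxt.ne⟩
      hsx
  rw [slope_comm f t s, slope_def_field, div_le_iff_of_neg (sub_neg.2 hxt)] at hslope
  linarith

lemma le_add_slope_mul_sub_of_concaveOn (hf : ConcaveOn ℝ S f) {s t x : ℝ} (hs : s ∈ S)
    (hx : x ∈ S) (hst : s < t) (htx : t ≤ x) : f x ≤ f t + slope f s t * (x - t) := by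
  rcases htx.eq_or_lt with rfl | htx
  · simp
  have hslope : slope f t x ≤ slope f t s :=
    hf.slope_anti (hf.1.ordConnected.out hs hx ⟨hst.le, htx.le⟩) ⟨hs, hst.ne⟩ ⟨hx, htx.ne'⟩
      (hst.trans htx).le
  rw [slope_comm f t s, slope_def_field, div_le_iff₀ (sub_pos.2 htx)] at hslope
  linarith

lemma antitoneOn_div_of_concaveOn_of_convexOn {a : ℝ} (hf : ConcaveOn ℝ S f)
    (hg : ConvexOn ℝ S g) (ha : a ∈ S) (hfa : 0 ≤ f a) (hga : g a ≤ 0)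
    (hf_nonneg : ∀ t ∈ S ∩ Ioi a, 0 ≤ f t) (hg_pos : ∀ t ∈ S ∩ Ioi a, 0 < g t) :
    AntitoneOn (fun t => f t / g t) (S ∩ Ioi a) := by
  rintro s ⟨hs, has : a < s⟩ t ⟨ht, hat : a < t⟩ hst
  have hf_chord : (s - a) * f t ≤ (t - a) * f s := by
    have := hf.slope_anti ha ⟨hs, has.ne'⟩ ⟨ht, hat.ne'⟩ hst
    rw [slope_def_field, slope_def_field, div_le_div_iff₀ (sub_pos.2 hat) (sub_pos.2 has)] at this
    nlinarith [mul_nonneg (sub_nonneg.2 hst) hfa]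
  have hg_chord : (t - a) * g s ≤ (s - a) * g t := by
    have := hg.slope_mono ha ⟨hs, has.ne'⟩ ⟨ht, hat.ne'⟩ hst
    rw [slope_def_field, slope_def_field, div_le_div_iff₀ (sub_pos.2 has) (sub_pos.2 hat)] at this
    nlinarith [mul_nonneg (sub_nonneg.2 hst) (neg_nonneg.2 hga)]
  rw [div_le_div_iff₀ (hg_pos t ⟨ht, hat⟩) (hg_pos s ⟨hs, has⟩)]
  refine le_of_mul_le_mul_left ?_ (sub_pos.2 hat)
  calc (t - a) * (f t * g s) = f t * ((t - a) * g s) := by ring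
    _ ≤ f t * ((s - a) * g t) := mul_le_mul_of_nonneg_left hg_chord (hf_nonneg t ⟨ht, hat⟩)
    _ = ((s - a) * f t) * g t := by ring
    _ ≤ ((t - a) * f s) * g t := mul_le_mul_of_nonneg_right hf_chord (hg_pos t ⟨ht, hat⟩).le
    _ = (t - a) * (f s * g t) := by ring

lemma le_two_mul_midpoint_of_concaveOn {a b t : ℝ} (hf : ConcaveOn ℝ (Icc a b) f)
    (hf_nonneg : ∀ t ∈ Icc a b, 0 ≤ f t) (ht : t ∈ Icc a b) : f t ≤ 2 * f ((a + b) / 2) := by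
  have ht' : a + b - t ∈ Icc a b := ⟨by linarith [ht.2], by linarith [ht.1]⟩
  have hmid : (a + b) / 2 = (2⁻¹ : ℝ) • t + (2⁻¹ : ℝ) • (a + b - t) := by
    simp only [smul_eq_mul]; ring
  have hconc := hf.2 ht ht' (by norm_num : (0 : ℝ) ≤ 2⁻¹) (by norm_num : (0 : ℝ) ≤ 2⁻¹)
    (by norm_num)
  rw [← hmid] at hconc
  simp only [smul_eq_mul] at hconc
  linarith [hf_nonneg _ ht']

lemma continuousOn_rpow_Ioo_of_concaveOn {a b p : ℝ} (hf : ConcaveOn ℝ (Icc a b) f) (hp : 0 ≤ p) :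
    ContinuousOn (fun t => f t ^ p) (Ioo a b) := by
  have hfc : ContinuousOn f (Ioo a b) := by simpa only [interior_Icc] using hf.continuousOn_interior
  exact hfc.rpow_const fun _ _ => Or.inr hp

lemma intervalIntegrable_rpow_of_concaveOn {a b u v p : ℝ} (hf : ConcaveOn ℝ (Icc a b) f)
    (hf_nonneg : ∀ t ∈ Icc a b, 0 ≤ f t) (hp : 0 ≤ p) (hu : u ∈ Icc a b) (hv : v ∈ Icc a b) :
    IntervalIntegrable (fun t => f t ^ p) volume u v := by
  have hab : a ≤ b := hu.1.trans hu.2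
  suffices IntervalIntegrable (fun t => f t ^ p) volume a b from
    this.mono_set (uIcc_subset_uIcc (by rwa [uIcc_of_le hab]) (by rwa [uIcc_of_le hab]))
  rw [intervalIntegrable_iff_integrableOn_Ioo_of_le hab]
  refine IntegrableOn.of_bound (C := (2 * f ((a + b) / 2)) ^ p) measure_Ioo_lt_top
    ((continuousOn_rpow_Ioo_of_concaveOn hf hp).aestronglyMeasurable measurableSet_Ioo) ?_
  filter_upwards [ae_restrict_mem measurableSet_Ioo] with t ht
  have htI := Ioo_subset_Icc_self ht
  rw [Real.norm_of_nonneg (Real.rpow_nonneg (hf_nonneg t htI) p)]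
  exact Real.rpow_le_rpow (hf_nonneg t htI) (le_two_mul_midpoint_of_concaveOn hf hf_nonneg htI) hp

end Concave

section AffineComparison

variable {f : ℝ → ℝ} {β m s t y b : ℝ}

lemma intervalIntegrable_affine_rpow (hβ : 0 ≤ β) (u v : ℝ) :
    IntervalIntegrable (fun x => (y + m * (x - t)) ^ β) volume u v :=
  (Continuous.rpow_const (by fun_prop) fun _ => Or.inr hβ).intervalIntegrable _ _

lemma mul_integral_affine_rpow (hβ : 0 ≤ β) (u v : ℝ) :
    (β + 1) * m * ∫ x in u..v, (y + m * (x - t)) ^ β =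
      (y + m * (v - t)) ^ (β + 1) - (y + m * (u - t)) ^ (β + 1) := by
  rw [← intervalIntegral.integral_const_mul]
  refine integral_eq_sub_of_hasDerivAt (f := fun x => (y + m * (x - t)) ^ (β + 1)) ?_ ?_
  · intro x _
    have haffine : HasDerivAt (fun x => y + m * (x - t)) m x := by
      simpa using (((hasDerivAt_id x).sub_const t).const_mul m).const_add y
    refine (haffine.rpow_const (p := β + 1) (Or.inr (by linarith))).congr_deriv ?_
    rw [add_sub_cancel_right]; ring
  · exact (intervalIntegrable_affine_rpow hβ u v).const_mul _

lemma neg_mul_integral_rpow_le_of_le_affine (hβ : 0 ≤ β) (hm : m ≤ 0) (htb : t ≤ b)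
    (hf : IntervalIntegrable (fun x => f x ^ β) volume t b) (hf_nonneg : ∀ x ∈ Icc t b, 0 ≤ f x)
    (hle : ∀ x ∈ Icc t b, f x ≤ y + m * (x - t)) :
    -((β + 1) * m) * ∫ x in t..b, f x ^ β ≤ y ^ (β + 1) := by
  have hb : b ∈ Icc t b := right_mem_Icc.2 htb
  have hmono : ∫ x in t..b, f x ^ β ≤ ∫ x in t..b, (y + m * (x - t)) ^ β :=
    integral_mono_on htb hf (intervalIntegrable_affine_rpow hβ _ _) fun x hx =>
      Real.rpow_le_rpow (hf_nonneg x hx) (hle x hx) hβ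
  have hend : 0 ≤ (y + m * (b - t)) ^ (β + 1) :=
    Real.rpow_nonneg ((hf_nonneg b hb).trans (hle b hb)) _
  calc -((β + 1) * m) * ∫ x in t..b, f x ^ β
      ≤ -((β + 1) * m) * ∫ x in t..b, (y + m * (x - t)) ^ β :=
        mul_le_mul_of_nonneg_left hmono (by nlinarith)
    _ = y ^ (β + 1) - (y + m * (b - t)) ^ (β + 1) := by
        rw [neg_mul, mul_integral_affine_rpow hβ, sub_self, mul_zero, add_zero, neg_sub]
    _ ≤ y ^ (β + 1) := sub_le_self _ hend

lemma rpow_sub_rpow_le_neg_mul_integral_of_affine_le (hβ : 0 ≤ β) (hm : m ≤ 0) (hy : 0 ≤ y)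
    (hst : s ≤ t) (hf : IntervalIntegrable (fun x => f x ^ β) volume s t)
    (hle : ∀ x ∈ Icc s t, y + m * (x - t) ≤ f x) :
    (y + m * (s - t)) ^ (β + 1) - y ^ (β + 1) ≤ -((β + 1) * m) * ∫ x in s..t, f x ^ β := by
  have hmono : ∫ x in s..t, (y + m * (x - t)) ^ β ≤ ∫ x in s..t, f x ^ β :=
    integral_mono_on hst (intervalIntegrable_affine_rpow hβ _ _) hf fun x hx =>
      Real.rpow_le_rpow (by nlinarith [hx.2]) (hle x hx) hβ
  calc (y + m * (s - t)) ^ (β + 1) - y ^ (β + 1)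
      = -((β + 1) * m) * ∫ x in s..t, (y + m * (x - t)) ^ β := by
        rw [neg_mul, mul_integral_affine_rpow hβ, sub_self, mul_zero, add_zero, neg_sub]
    _ ≤ -((β + 1) * m) * ∫ x in s..t, f x ^ β :=
        mul_le_mul_of_nonneg_left hmono (by nlinarith)

end AffineComparison

section TailIntegral

variable {h : ℝ → ℝ} {a b s t β : ℝ}

lemma integral_rpow_nonneg (h_nonneg : ∀ t ∈ Icc a b, 0 ≤ h t) (hs : s ∈ Icc a b) (ht : t ∈ Icc a b)
    (hst : s ≤ t) : 0 ≤ ∫ x in s..t, h x ^ β :=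
  integral_nonneg hst fun x hx => Real.rpow_nonneg (h_nonneg x ⟨hs.1.trans hx.1, hx.2.trans ht.2⟩) _

-- The secant through `s` and `t` lies below `h` on `[s, t]` and above it on `[t, b]`.
lemma rpow_sub_rpow_mul_integral_le_of_concaveOn (hconc : ConcaveOn ℝ (Icc a b) h)
    (h_nonneg : ∀ t ∈ Icc a b, 0 ≤ h t) (hβ : 0 ≤ β) (hs : s ∈ Icc a b) (ht : t ∈ Icc a b)
    (hst : s < t) (hle : h t ≤ h s) :
    (h s ^ (β + 1) - h t ^ (β + 1)) * ∫ x in t..b, h x ^ β ≤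
      h t ^ (β + 1) * ∫ x in s..t, h x ^ β := by
  have hb : b ∈ Icc a b := ⟨ht.1.trans ht.2, le_rfl⟩
  have hI : 0 ≤ ∫ x in s..t, h x ^ β := integral_rpow_nonneg h_nonneg hs ht hst.le
  have hJ : 0 ≤ ∫ x in t..b, h x ^ β := integral_rpow_nonneg h_nonneg ht hb ht.2
  set m := slope h s t with hm
  have hm_nonpos : m ≤ 0 := by
    rw [hm, slope_def_field]
    exact div_nonpos_of_nonpos_of_nonneg (sub_nonpos.2 hle) (sub_nonneg.2 hst.le)
  have hsecant : h t + m * (s - t) = h s := by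
    rw [hm, slope_comm, slope_def_field, div_mul_cancel₀ _ (sub_ne_zero.2 hst.ne)]; ring
  have hright : -((β + 1) * m) * ∫ x in t..b, h x ^ β ≤ h t ^ (β + 1) :=
    neg_mul_integral_rpow_le_of_le_affine hβ hm_nonpos ht.2
      (intervalIntegrable_rpow_of_concaveOn hconc h_nonneg hβ ht hb)
      (fun x hx => h_nonneg x ⟨ht.1.trans hx.1, hx.2⟩)
      fun x hx => le_add_slope_mul_sub_of_concaveOn hconc hs ⟨ht.1.trans hx.1, hx.2⟩ hst hx.1
  have hleft : h s ^ (β + 1) - h t ^ (β + 1) ≤ -((β + 1) * m) * ∫ x in s..t, h x ^ β := by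
    simpa only [hsecant] using
      rpow_sub_rpow_le_neg_mul_integral_of_affine_le hβ hm_nonpos (h_nonneg t ht) hst.le
        (intervalIntegrable_rpow_of_concaveOn hconc h_nonneg hβ hs ht)
        fun x hx => add_slope_mul_sub_le_of_concaveOn hconc hs ht hx.1 hx.2
  calc (h s ^ (β + 1) - h t ^ (β + 1)) * ∫ x in t..b, h x ^ β
      ≤ (-((β + 1) * m) * ∫ x in s..t, h x ^ β) * ∫ x in t..b, h x ^ β :=
        mul_le_mul_of_nonneg_right hleft hJ
    _ = (-((β + 1) * m) * ∫ x in t..b, h x ^ β) * ∫ x in s..t, h x ^ β := by ring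
    _ ≤ h t ^ (β + 1) * ∫ x in s..t, h x ^ β := mul_le_mul_of_nonneg_right hright hI

lemma rpow_mul_integral_rpow_le_of_concaveOn (hconc : ConcaveOn ℝ (Icc a b) h)
    (h_nonneg : ∀ t ∈ Icc a b, 0 ≤ h t) (hβ : 0 ≤ β) (hs : s ∈ Icc a b) (ht : t ∈ Icc a b)
    (hst : s ≤ t) :
    h s ^ (β + 1) * ∫ x in t..b, h x ^ β ≤ h t ^ (β + 1) * ∫ x in s..b, h x ^ β := by
  have hb : b ∈ Icc a b := ⟨ht.1.trans ht.2, le_rfl⟩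
  rw [← integral_add_adjacent_intervals
    (intervalIntegrable_rpow_of_concaveOn hconc h_nonneg hβ hs ht)
    (intervalIntegrable_rpow_of_concaveOn hconc h_nonneg hβ ht hb)]
  rcases hst.eq_or_lt with rfl | hst
  · rw [integral_same, zero_add]
  rcases le_total (h s) (h t) with hle | hge
  · have hpow : h s ^ (β + 1) ≤ h t ^ (β + 1) :=
      Real.rpow_le_rpow (h_nonneg s hs) hle (by linarith)
    exact mul_le_mul hpow (le_add_of_nonneg_left (integral_rpow_nonneg h_nonneg hs ht hst.le))
      (integral_rpow_nonneg h_nonneg ht hb ht.2) (Real.rpow_nonneg (h_nonneg t ht) _)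
  · linarith [rpow_sub_rpow_mul_integral_le_of_concaveOn hconc h_nonneg hβ hs ht hst hge]

end TailIntegral

lemma integral_mul_nonneg_of_antitoneOn {p q v w : ℝ → ℝ} {a b r : ℝ} (hr : r ∈ Ioo a b)
    (hp : AntitoneOn p (Ioo a b)) (hq : AntitoneOn q (Ioo a b)) (hw : ∀ t ∈ Ioo a b, 0 ≤ w t)
    (hv : ∀ t ∈ Ioo a b, v t = q t * w t) (hpr : p r = 0)
    (hpw : IntervalIntegrable (fun t => p t * w t) volume a b)
    (hpv : IntervalIntegrable (fun t => p t * v t) volume a b)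
    (hmean : ∫ t in a..b, p t * w t = 0) : 0 ≤ ∫ t in a..b, p t * v t := by
  calc (0 : ℝ) = ∫ t in a..b, q r * (p t * w t) := by
        rw [intervalIntegral.integral_const_mul, hmean, mul_zero]
    _ ≤ ∫ t in a..b, p t * v t := by
      refine integral_mono_on_of_le_Ioo (hr.1.trans hr.2).le (hpw.const_mul _) hpv fun t ht => ?_
      have hsign : 0 ≤ p t * (q t - q r) := by
        rcases le_total t r with htr | hrt
        · exact mul_nonneg (hpr ▸ hp ht hr htr) (sub_nonneg.2 (hq ht hr htr))
        · exact mul_nonneg_of_nonpos_of_nonpos (hpr ▸ hp hr ht hrt) (sub_nonpos.2 (hq hr ht hrt))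
      rw [hv t ht]
      linarith [mul_nonneg hsign (hw t ht)]

lemma hasDerivAt_rpow_mul_one_sub_rpow {p q u : ℝ} (hu : u ∈ Ioo (0 : ℝ) 1) :
    HasDerivAt (fun u => u ^ (p + 1) * (1 - u) ^ (q + 1))
      (((p + 1) - (p + q + 2) * u) * (u ^ p * (1 - u) ^ q)) u := by
  have h1u : 0 < 1 - u := sub_pos.2 hu.2
  have hleft : HasDerivAt (fun u : ℝ => u ^ (p + 1)) ((p + 1) * u ^ p) u := by
    simpa only [add_sub_cancel_right] using
      Real.hasDerivAt_rpow_const (p := p + 1) (Or.inl hu.1.ne')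
  have hright : HasDerivAt (fun u : ℝ => (1 - u) ^ (q + 1)) (-((q + 1) * (1 - u) ^ q)) u := by
    simpa only [add_sub_cancel_right, neg_mul, one_mul] using
      ((hasDerivAt_id' u).const_sub 1).rpow_const (p := q + 1) (Or.inl h1u.ne')
  refine (hleft.mul hright).congr_deriv ?_
  rw [Real.rpow_add_one hu.1.ne', Real.rpow_add_one h1u.ne']
  ring

/-- A concave weight on `[a, b]`: a nonnegative concave function with positive integral. -/
structure IsConcaveWeight (h : ℝ → ℝ) (a b : ℝ) : Prop where
  lt : a < b
  concaveOn : ConcaveOn ℝ (Icc a b) h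
  nonneg : ∀ t ∈ Icc a b, 0 ≤ h t
  integral_pos : 0 < ∫ t in a..b, h t

/-- The `p`-powered centroid `g_p(h)` of `h` on `[a, b]`. -/
noncomputable def poweredCentroid (h : ℝ → ℝ) (a b p : ℝ) : ℝ :=
  (∫ t in a..b, t * h t ^ p) / ∫ t in a..b, h t ^ p

/-- The fraction of the mass of `h ^ p` on `[a, b]` that lies to the right of `x`. -/
noncomputable def tailFraction (h : ℝ → ℝ) (a b p x : ℝ) : ℝ :=
  (∫ t in x..b, h t ^ p) / ∫ t in a..b, h t ^ p

/-- The root of the tail fraction of `h ^ p` that is concave in `x` when `h` is concave; the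
exponent is the one of the one-dimensional Borell–Brascamp–Lieb inequality. -/
noncomputable def tailRoot (h : ℝ → ℝ) (a b p x : ℝ) : ℝ :=
  tailFraction h a b p x ^ (p + 1)⁻¹

lemma tailFraction_right (h : ℝ → ℝ) (a b p : ℝ) : tailFraction h a b p b = 0 := by
  rw [tailFraction, integral_same, zero_div]

lemma tailRoot_right {h : ℝ → ℝ} {a b p : ℝ} (hp : 0 ≤ p) : tailRoot h a b p b = 0 := by
  rw [tailRoot, tailFraction_right, Real.zero_rpow (by positivity)]

namespace IsConcaveWeight

variable {h : ℝ → ℝ} {a b p x α β : ℝ}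

lemma pos (hh : IsConcaveWeight h a b) (hx : x ∈ Ioo a b) : 0 < h x := by
  obtain ⟨c, hc, hc_pos⟩ : ∃ c ∈ Icc a b, 0 < h c := by
    by_contra! hnonpos
    have hle : ∫ t in a..b, h t ≤ ∫ _ in a..b, (0 : ℝ) :=
      integral_mono_on hh.lt.le (intervalIntegrable_of_integral_ne_zero hh.integral_pos.ne')
        intervalIntegrable_const hnonpos
    rw [intervalIntegral.integral_zero] at hle
    exact hle.not_gt hh.integral_pos
  have ha := left_mem_Icc.2 hh.lt.le
  have hb := right_mem_Icc.2 hh.lt.le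
  rcases lt_trichotomy x c with hxc | rfl | hcx
  · refine pos_of_mem_openSegment_of_concaveOn hh.concaveOn hc ha hc_pos (hh.nonneg a ha) ?_
    rw [openSegment_symm, openSegment_eq_Ioo (hx.1.trans hxc)]
    exact ⟨hx.1, hxc⟩
  · exact hc_pos
  · refine pos_of_mem_openSegment_of_concaveOn hh.concaveOn hc hb hc_pos (hh.nonneg b hb) ?_
    rw [openSegment_eq_Ioo (hcx.trans hx.2)]
    exact ⟨hcx, hx.2⟩

lemma intervalIntegrable_rpow (hh : IsConcaveWeight h a b) (hp : 0 ≤ p) :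
    IntervalIntegrable (fun t => h t ^ p) volume a b :=
  intervalIntegrable_rpow_of_concaveOn hh.concaveOn hh.nonneg hp (left_mem_Icc.2 hh.lt.le)
    (right_mem_Icc.2 hh.lt.le)

lemma intervalIntegrable_mul_rpow (hh : IsConcaveWeight h a b) (hp : 0 ≤ p) {f : ℝ → ℝ}
    (hf : ContinuousOn f (Icc a b)) : IntervalIntegrable (fun t => f t * h t ^ p) volume a b :=
  (hh.intervalIntegrable_rpow hp).continuousOn_mul (by rwa [uIcc_of_le hh.lt.le])

lemma integral_rpow_pos (hh : IsConcaveWeight h a b) (hp : 0 ≤ p) : 0 < ∫ t in a..b, h t ^ p :=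
  intervalIntegral_pos_of_pos_on (hh.intervalIntegrable_rpow hp)
    (fun _ ht => Real.rpow_pos_of_pos (hh.pos ht) p) hh.lt

lemma tailFraction_left (hh : IsConcaveWeight h a b) (hp : 0 ≤ p) : tailFraction h a b p a = 1 :=
  div_self (hh.integral_rpow_pos hp).ne'

lemma continuousOn_tailFraction (hh : IsConcaveWeight h a b) (hp : 0 ≤ p) :
    ContinuousOn (tailFraction h a b p) (Icc a b) := by
  have hint : IntegrableOn (fun t => h t ^ p) (uIcc a b) := by
    rw [uIcc_of_le hh.lt.le, ← intervalIntegrable_iff_integrableOn_Icc_of_le hh.lt.le]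
    exact hh.intervalIntegrable_rpow hp
  have hcont := (continuousOn_primitive_interval_left hint).div_const (∫ t in a..b, h t ^ p)
  rwa [uIcc_of_le hh.lt.le] at hcont

lemma hasDerivAt_tailFraction (hh : IsConcaveWeight h a b) (hp : 0 ≤ p) (hx : x ∈ Ioo a b) :
    HasDerivAt (tailFraction h a b p) (-h x ^ p / ∫ t in a..b, h t ^ p) x := by
  have hcont : ContinuousOn (fun t => h t ^ p) (Ioo a b) :=
    continuousOn_rpow_Ioo_of_concaveOn hh.concaveOn hp
  exact (integral_hasDerivAt_left
    (intervalIntegrable_rpow_of_concaveOn hh.concaveOn hh.nonneg hp (Ioo_subset_Icc_self hx)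
      (right_mem_Icc.2 hh.lt.le))
    (hcont.stronglyMeasurableAtFilter isOpen_Ioo x hx)
    (hcont.continuousAt (isOpen_Ioo.mem_nhds hx))).div_const _

lemma strictAntiOn_tailFraction (hh : IsConcaveWeight h a b) (hp : 0 ≤ p) :
    StrictAntiOn (tailFraction h a b p) (Icc a b) := by
  refine strictAntiOn_of_deriv_neg (convex_Icc a b) (hh.continuousOn_tailFraction hp) fun x hx => ?_
  rw [interior_Icc] at hx
  rw [(hh.hasDerivAt_tailFraction hp hx).deriv]
  exact div_neg_of_neg_of_pos (neg_neg_of_pos (Real.rpow_pos_of_pos (hh.pos hx) p))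
    (hh.integral_rpow_pos hp)

lemma tailFraction_nonneg (hh : IsConcaveWeight h a b) (hp : 0 ≤ p) (hx : x ∈ Icc a b) :
    0 ≤ tailFraction h a b p x :=
  tailFraction_right h a b p ▸
    (hh.strictAntiOn_tailFraction hp).antitoneOn hx (right_mem_Icc.2 hh.lt.le) hx.2

lemma tailRoot_left (hh : IsConcaveWeight h a b) (hp : 0 ≤ p) : tailRoot h a b p a = 1 := by
  rw [tailRoot, hh.tailFraction_left hp, Real.one_rpow]

lemma tailRoot_rpow (hh : IsConcaveWeight h a b) (hp : 0 ≤ p) (hx : x ∈ Icc a b) :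
    tailRoot h a b p x ^ (p + 1) = tailFraction h a b p x :=
  Real.rpow_inv_rpow (hh.tailFraction_nonneg hp hx) (by linarith)

lemma continuousOn_tailRoot (hh : IsConcaveWeight h a b) (hp : 0 ≤ p) :
    ContinuousOn (tailRoot h a b p) (Icc a b) :=
  (hh.continuousOn_tailFraction hp).rpow_const fun _ _ => Or.inr (by positivity)

lemma strictAntiOn_tailRoot (hh : IsConcaveWeight h a b) (hp : 0 ≤ p) :
    StrictAntiOn (tailRoot h a b p) (Icc a b) := fun _ hx _ hy hxy =>
  Real.rpow_lt_rpow (hh.tailFraction_nonneg hp hy) (hh.strictAntiOn_tailFraction hp hx hy hxy)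
    (by positivity)

lemma tailRoot_mem_Ioo (hh : IsConcaveWeight h a b) (hp : 0 ≤ p) (hx : x ∈ Ioo a b) :
    tailRoot h a b p x ∈ Ioo (0 : ℝ) 1 := by
  have hxI := Ioo_subset_Icc_self hx
  constructor
  · rw [← tailRoot_right (h := h) (a := a) (b := b) hp]
    exact hh.strictAntiOn_tailRoot hp hxI (right_mem_Icc.2 hh.lt.le) hx.2
  · rw [← hh.tailRoot_left hp]
    exact hh.strictAntiOn_tailRoot hp (left_mem_Icc.2 hh.lt.le) hxI hx.1

lemma hasDerivAt_tailRoot (hh : IsConcaveWeight h a b) (hp : 0 ≤ p) (hx : x ∈ Ioo a b) :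
    HasDerivAt (tailRoot h a b p)
      (-((h x / tailRoot h a b p x) ^ p / ((p + 1) * ∫ t in a..b, h t ^ p))) x := by
  have hφ : 0 < tailRoot h a b p x := (hh.tailRoot_mem_Ioo hp hx).1
  have hT : tailRoot h a b p x ^ (p + 1) = tailFraction h a b p x :=
    hh.tailRoot_rpow hp (Ioo_subset_Icc_self hx)
  have hT_pow : tailFraction h a b p x ^ ((p + 1)⁻¹ - 1) = (tailRoot h a b p x ^ p)⁻¹ := by
    rw [← hT, ← Real.rpow_mul hφ.le, ← Real.rpow_neg hφ.le]
    congr 1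
    field_simp
    ring
  have hT_ne : tailFraction h a b p x ≠ 0 := hT ▸ (Real.rpow_pos_of_pos hφ _).ne'
  refine ((hh.hasDerivAt_tailFraction hp hx).rpow_const (Or.inl hT_ne)).congr_deriv ?_
  rw [hT_pow, Real.div_rpow (hh.pos hx).le hφ.le]
  have := (hh.integral_rpow_pos hp).ne'
  field_simp

lemma monotoneOn_div_tailRoot (hh : IsConcaveWeight h a b) (hp : 0 ≤ p) :
    MonotoneOn (fun x => h x / tailRoot h a b p x) (Ioo a b) := by
  intro s hs t ht hst
  have hsI := Ioo_subset_Icc_self hs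
  have htI := Ioo_subset_Icc_self ht
  have hφs := (hh.tailRoot_mem_Ioo hp hs).1
  have hφt := (hh.tailRoot_mem_Ioo hp ht).1
  rw [div_le_div_iff₀ hφs hφt, ← Real.rpow_le_rpow_iff (mul_nonneg (hh.pos hs).le hφt.le)
      (mul_nonneg (hh.pos ht).le hφs.le) (by linarith : 0 < p + 1),
    Real.mul_rpow (hh.pos hs).le hφt.le, Real.mul_rpow (hh.pos ht).le hφs.le,
    hh.tailRoot_rpow hp hsI, hh.tailRoot_rpow hp htI, tailFraction, tailFraction,
    ← mul_div_assoc, ← mul_div_assoc]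
  exact div_le_div_of_nonneg_right
    (rpow_mul_integral_rpow_le_of_concaveOn hh.concaveOn hh.nonneg hp hsI htI hst)
    (hh.integral_rpow_pos hp).le

theorem concaveOn_tailRoot (hh : IsConcaveWeight h a b) (hp : 0 ≤ p) :
    ConcaveOn ℝ (Icc a b) (tailRoot h a b p) := by
  have hderiv {x : ℝ} (hx : x ∈ Ioo a b) := hh.hasDerivAt_tailRoot hp hx
  refine AntitoneOn.concaveOn_of_deriv (convex_Icc a b) (hh.continuousOn_tailRoot hp) ?_ ?_ <;>
    rw [interior_Icc]
  · exact fun x hx => (hderiv hx).differentiableAt.differentiableWithinAt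
  · intro s hs t ht hst
    rw [(hderiv hs).deriv, (hderiv ht).deriv, neg_le_neg_iff]
    have hI := hh.integral_rpow_pos hp
    refine div_le_div_of_nonneg_right (Real.rpow_le_rpow ?_
      (hh.monotoneOn_div_tailRoot hp hs ht hst) hp) (by positivity)
    exact div_nonneg (hh.pos hs).le (hh.tailRoot_mem_Ioo hp hs).1.le

lemma antitoneOn_div_one_sub_tailRoot (hh : IsConcaveWeight h a b) (hp : 0 ≤ p) :
    AntitoneOn (fun x => h x / (1 - tailRoot h a b p x)) (Ioo a b) := by
  have ha : a ∈ Icc a b := left_mem_Icc.2 hh.lt.le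
  have hφ_lt : ∀ t ∈ Icc a b ∩ Ioi a, 0 < 1 - tailRoot h a b p t := fun t ht =>
    sub_pos.2 (hh.tailRoot_left hp ▸ hh.strictAntiOn_tailRoot hp ha ht.1 ht.2)
  refine (antitoneOn_div_of_concaveOn_of_convexOn (g := fun t => 1 - tailRoot h a b p t)
    hh.concaveOn ((convexOn_const 1 (convex_Icc a b)).sub (hh.concaveOn_tailRoot hp)) ha
    (hh.nonneg a ha) ?_ (fun t ht => hh.nonneg t ht.1) hφ_lt).mono
    fun t ht => ⟨Ioo_subset_Icc_self ht, ht.1⟩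
  simp only [hh.tailRoot_left hp, sub_self, le_refl]

lemma hasDerivAt_tailRoot_rpow_mul_one_sub_rpow (hh : IsConcaveWeight h a b) (hβ : 0 ≤ β)
    (hα : α + 2 ≠ 0) (hx : x ∈ Ioo a b) :
    HasDerivAt (fun t => tailRoot h a b β t ^ (β + 1) * (1 - tailRoot h a b β t) ^ (α - β + 1))
      ((α + 2) / ((β + 1) * ∫ t in a..b, h t ^ β) *
        ((tailRoot h a b β x - (β + 1) / (α + 2)) *
          ((1 - tailRoot h a b β x) ^ (α - β) * h x ^ β))) x := by
  have hφ := hh.tailRoot_mem_Ioo hβ hx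
  have hφ_pow := (Real.rpow_pos_of_pos hφ.1 β).ne'
  have hI := (hh.integral_rpow_pos hβ).ne'
  refine ((hasDerivAt_rpow_mul_one_sub_rpow hφ).comp x
    (hh.hasDerivAt_tailRoot hβ hx)).congr_deriv ?_
  rw [Real.div_rpow (hh.pos hx).le hφ.1.le]
  field_simp
  ring

lemma intervalIntegrable_mul_one_sub_tailRoot_rpow_mul (hh : IsConcaveWeight h a b) (hβ : 0 ≤ β)
    (hβα : β ≤ α) {f : ℝ → ℝ} (hf : ContinuousOn f (Icc a b)) :
    IntervalIntegrable (fun t => f t * ((1 - tailRoot h a b β t) ^ (α - β) * h t ^ β))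
      volume a b := by
  have hpow : ContinuousOn (fun t => (1 - tailRoot h a b β t) ^ (α - β)) (Icc a b) :=
    (continuousOn_const.sub (hh.continuousOn_tailRoot hβ)).rpow_const fun _ _ =>
      Or.inr (sub_nonneg.2 hβα)
  simpa only [Pi.mul_apply, mul_assoc] using hh.intervalIntegrable_mul_rpow hβ (hf.mul hpow)

lemma integral_tailRoot_sub_mul_eq_zero (hh : IsConcaveWeight h a b) (hβ : 0 ≤ β) (hβα : β ≤ α) :
    ∫ t in a..b, (tailRoot h a b β t - (β + 1) / (α + 2)) *
      ((1 - tailRoot h a b β t) ^ (α - β) * h t ^ β) = 0 := by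
  have hφ := hh.continuousOn_tailRoot hβ
  have hG : ContinuousOn
      (fun t => tailRoot h a b β t ^ (β + 1) * (1 - tailRoot h a b β t) ^ (α - β + 1))
      (Icc a b) :=
    (hφ.rpow_const fun _ _ => Or.inr (by linarith)).mul
      ((continuousOn_const.sub hφ).rpow_const fun _ _ => Or.inr (by linarith))
  have hftc := integral_eq_sub_of_hasDerivAt_of_le hh.lt.le hG
    (fun t ht => hh.hasDerivAt_tailRoot_rpow_mul_one_sub_rpow hβ (by linarith) ht)
    ((hh.intervalIntegrable_mul_one_sub_tailRoot_rpow_mul hβ hβα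
      (hφ.sub continuousOn_const)).const_mul _)
  rw [intervalIntegral.integral_const_mul, hh.tailRoot_left hβ, tailRoot_right hβ, sub_self,
    Real.zero_rpow (by linarith), Real.zero_rpow (by linarith), mul_zero, zero_mul, sub_zero,
    mul_eq_zero] at hftc
  have hI := hh.integral_rpow_pos hβ
  have hα : 0 ≤ α := hβ.trans hβα
  exact hftc.resolve_left (by positivity)

lemma div_one_sub_tailRoot_rpow_mul (hh : IsConcaveWeight h a b) (hβ : 0 ≤ β)
    (hx : x ∈ Ioo a b) :
    (h x / (1 - tailRoot h a b β x)) ^ (α - β) *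
      ((1 - tailRoot h a b β x) ^ (α - β) * h x ^ β) = h x ^ α := by
  have hφ := sub_pos.2 (hh.tailRoot_mem_Ioo hβ hx).2
  rw [← mul_assoc, ← Real.mul_rpow (div_nonneg (hh.pos hx).le hφ.le) hφ.le,
    div_mul_cancel₀ _ hφ.ne', ← Real.rpow_add (hh.pos hx), sub_add_cancel]

lemma integral_tailRoot_sub_mul_rpow_nonneg (hh : IsConcaveWeight h a b) (hβ : 0 ≤ β)
    (hβα : β ≤ α) :
    0 ≤ ∫ t in a..b, (tailRoot h a b β t - (β + 1) / (α + 2)) * h t ^ α := by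
  have hα : 0 ≤ α := hβ.trans hβα
  have hφ := hh.continuousOn_tailRoot hβ
  have hφ_sub : ContinuousOn (fun t => tailRoot h a b β t - (β + 1) / (α + 2)) (Icc a b) :=
    hφ.sub continuousOn_const
  have hφ_lt : ∀ t ∈ Ioo a b, 0 < 1 - tailRoot h a b β t := fun t ht =>
    sub_pos.2 (hh.tailRoot_mem_Ioo hβ ht).2
  obtain ⟨r, hr, hφr⟩ : (β + 1) / (α + 2) ∈ tailRoot h a b β '' Ioo a b := by
    refine intermediate_value_Ioo' hh.lt.le hφ ?_
    rw [hh.tailRoot_left hβ, tailRoot_right hβ]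
    exact ⟨by positivity, (div_lt_one (by linarith)).2 (by linarith)⟩
  refine integral_mul_nonneg_of_antitoneOn hr ?_ ?_ ?_
    (fun t ht => (hh.div_one_sub_tailRoot_rpow_mul hβ ht).symm) (sub_eq_zero.2 hφr)
    (hh.intervalIntegrable_mul_one_sub_tailRoot_rpow_mul hβ hβα hφ_sub)
    (hh.intervalIntegrable_mul_rpow hα hφ_sub) (hh.integral_tailRoot_sub_mul_eq_zero hβ hβα)
  · exact fun s hs t ht hst => sub_le_sub_right ((hh.strictAntiOn_tailRoot hβ).antitoneOn
      (Ioo_subset_Icc_self hs) (Ioo_subset_Icc_self ht) hst) _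
  · exact fun s hs t ht hst => Real.rpow_le_rpow (div_nonneg (hh.pos ht).le (hφ_lt t ht).le)
      (hh.antitoneOn_div_one_sub_tailRoot hβ hs ht hst) (sub_nonneg.2 hβα)
  · exact fun t ht => mul_nonneg (Real.rpow_nonneg (hφ_lt t ht).le _)
      (Real.rpow_nonneg (hh.pos ht).le _)

lemma le_integral_tailRoot_mul_rpow_div (hh : IsConcaveWeight h a b) (hβ : 0 ≤ β) (hβα : β ≤ α) :
    (β + 1) / (α + 2) ≤
      (∫ t in a..b, tailRoot h a b β t * h t ^ α) / ∫ t in a..b, h t ^ α := by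
  have hα : 0 ≤ α := hβ.trans hβα
  have hnonneg := hh.integral_tailRoot_sub_mul_rpow_nonneg hβ hβα
  simp only [sub_mul] at hnonneg
  rw [integral_sub (hh.intervalIntegrable_mul_rpow hα (hh.continuousOn_tailRoot hβ))
    ((hh.intervalIntegrable_rpow hα).const_mul _), intervalIntegral.integral_const_mul,
    sub_nonneg] at hnonneg
  exact (le_div_iff₀ (hh.integral_rpow_pos hα)).2 hnonneg

lemma poweredCentroid_mem_hypograph_of_concaveOn (hh : IsConcaveWeight h a b) (hα : 0 ≤ α)
    {f : ℝ → ℝ} (hf : ConcaveOn ℝ (Icc a b) f) (hfc : ContinuousOn f (Icc a b)) :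
    poweredCentroid h a b α ∈ Icc a b ∧
      (∫ t in a..b, f t * h t ^ α) / (∫ t in a..b, h t ^ α) ≤ f (poweredCentroid h a b α) :=
  intervalWeightedAverage_mem_hypograph_of_concaveOn hh.lt.le hf hfc
    (fun t ht => Real.rpow_nonneg (hh.nonneg t ht) α) (hh.intervalIntegrable_rpow hα)
    (hh.integral_rpow_pos hα)

theorem rpow_le_tailFraction_poweredCentroid (hh : IsConcaveWeight h a b) (hβ : 0 ≤ β)
    (hβα : β ≤ α) :
    ((β + 1) / (α + 2)) ^ (β + 1) ≤ tailFraction h a b β (poweredCentroid h a b α) := by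
  have hα : 0 ≤ α := hβ.trans hβα
  obtain ⟨hmem, hjensen⟩ := hh.poweredCentroid_mem_hypograph_of_concaveOn hα
    (hh.concaveOn_tailRoot hβ) (hh.continuousOn_tailRoot hβ)
  calc ((β + 1) / (α + 2)) ^ (β + 1)
      ≤ tailRoot h a b β (poweredCentroid h a b α) ^ (β + 1) :=
        Real.rpow_le_rpow (by positivity)
          ((hh.le_integral_tailRoot_mul_rpow_div hβ hβα).trans hjensen) (by positivity)
    _ = tailFraction h a b β (poweredCentroid h a b α) := hh.tailRoot_rpow hβ hmem

end IsConcaveWeight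

theorem stmt_0 (a b α β : ℝ) (h : ℝ → ℝ) (hab : a < b)
    (hconc : ConcaveOn ℝ (Set.Icc a b) h)
    (hnn : ∀ t ∈ Set.Icc a b, 0 ≤ h t)
    (hint : 0 < ∫ t in a..b, h t)
    (hα : 0 < α) (hβ : 0 < β) (hβα : β ≤ α) :
    (∫ t in ((∫ t in a..b, t * h t ^ α) / ∫ t in a..b, h t ^ α)..b, h t ^ β) /
      (∫ t in a..b, h t ^ β) ≥ ((β + 1) / (α + 2)) ^ (β + 1) := by
  have hh : IsConcaveWeight h a b := ⟨hab, hconc, hnn, hint⟩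
  exact hh.rpow_le_tailFraction_poweredCentroid hβ.le hβα
end

section
/- Let f:[a,b]→[0,∞) with a<0<b be a p-concave function for some p>0 (i.e. f^p is concave on its support), with positive integral, and suppose its 1-centroid (∫_a^b t f(t) dt)/(∫_a^b f(t) dt) equals 0. Then (∫_a^0 f(t) dt)/(∫_a^b f(t) dt) ≥ ((p+1)/(2p+1))^{(p+1)/p}. -/
/-!
Write `V t = ∫_a^t f` and `s = p / (p + 1)`. On the support of `f`, the function `V ^ s` lies below
an affine function agreeing with it at `0`: compare `f` with the cone `f 0 * (1 + t / A)₊ ^ (1 / p)`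
that has the same value at `0` and the same mass to the left of `0`. Integrating
`V t ^ s ≤ V 0 ^ s * (1 + t / A)` against `f`, the linear term drops out because the centroid
is `0`, while the left side gives `(V b) ^ (s + 1) / (s + 1)` by the chain rule. Hence
`(V 0 / V b) ^ s ≥ 1 / (s + 1) = (p + 1) / (2 * p + 1)`.
-/

open MeasureTheory Set

theorem absolutelyContinuousOnInterval_comp_of_lipschitzOnWith {f g : ℝ → ℝ} {a b : ℝ}
    {s : Set ℝ} {K : NNReal} (hg : LipschitzOnWith K g s)
    (hf : AbsolutelyContinuousOnInterval f a b) (hfs : MapsTo f (uIcc a b) s) :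
    AbsolutelyContinuousOnInterval (g ∘ f) a b := by
  have hbound := hf.const_mul (K : ℝ)
  refine squeeze_zero' (.of_forall fun _ => Finset.sum_nonneg fun _ _ => dist_nonneg) ?_ hbound
  filter_upwards [Filter.mem_inf_of_right (Filter.mem_principal_self _)] with E hE
  gcongr with i hi
  calc dist (g (f (E.2 i).1)) (g (f (E.2 i).2))
      ≤ K * dist (f (E.2 i).1) (f (E.2 i).2) :=
        hg.dist_le_mul _ (hfs (hE.1 i hi).1) _ (hfs (hE.1 i hi).2)
    _ = dist (K * f (E.2 i).1) (K * f (E.2 i).2) := by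
        simp only [Real.dist_eq, ← mul_sub, abs_mul, NNReal.abs_eq]

theorem integral_deriv_comp_primitive_mul {f g : ℝ → ℝ} {a b : ℝ}
    (hf : IntervalIntegrable f volume a b) (hg : ContDiff ℝ 1 g) :
    ∫ x in a..b, deriv g (∫ t in a..x, f t) * f x = g (∫ t in a..b, f t) - g 0 := by
  have hac : AbsolutelyContinuousOnInterval (fun x => ∫ t in a..x, f t) a b :=
    hf.absolutelyContinuousOnInterval_intervalIntegral left_mem_uIcc
  obtain ⟨C, hC⟩ := hac.exists_bound
  obtain ⟨K, hK⟩ := hg.contDiffOn.exists_lipschitzOnWith one_ne_zero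
    (convex_closedBall (0 : ℝ) C) (isCompact_closedBall 0 C)
  have hcomp := absolutelyContinuousOnInterval_comp_of_lipschitzOnWith hK hac
    fun x hx => mem_closedBall_zero_iff.2 (hC x hx)
  have hderiv : ∀ᵐ x, x ∈ uIoc a b →
      deriv g (∫ t in a..x, f t) * f x = deriv (g ∘ fun x => ∫ t in a..x, f t) x := by
    filter_upwards [hf.ae_hasDerivAt_integral] with x hx hxab
    exact ((hg.differentiable one_ne_zero _).hasDerivAt.comp x
      (hx (uIoc_subset_uIcc hxab) a left_mem_uIcc)).deriv.symm
  rw [intervalIntegral.integral_congr_ae hderiv, hcomp.integral_deriv_eq_sub]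
  simp

theorem integral_rpow_primitive_mul {f : ℝ → ℝ} {a b s : ℝ}
    (hf : IntervalIntegrable f volume a b) (hs : 0 ≤ s) :
    ∫ x in a..b, (∫ t in a..x, f t) ^ s * f x = (∫ t in a..b, f t) ^ (s + 1) / (s + 1) := by
  have hs1 : s + 1 ≠ 0 := by positivity
  have hchain := integral_deriv_comp_primitive_mul hf
    (Real.contDiff_rpow_const_of_le (p := s + 1) (n := 1) (by simpa using hs))
  have hderiv (x : ℝ) : deriv (fun y : ℝ => y ^ (s + 1)) x = (s + 1) * x ^ s := by
    rw [Real.deriv_rpow_const, add_sub_cancel_right]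
  simp only [hderiv, mul_assoc, intervalIntegral.integral_const_mul, Real.zero_rpow hs1,
    sub_zero] at hchain
  rw [← hchain, mul_div_cancel_left₀ _ hs1]

theorem integral_max_zero_rpow {q : ℝ} (hq : 0 < q) (x y : ℝ) :
    ∫ u in x..y, max 0 u ^ q = (max 0 y ^ (q + 1) - max 0 x ^ (q + 1)) / (q + 1) := by
  have hq1 : q + 1 ≠ 0 := by positivity
  have hcont {r : ℝ} (hr : 0 ≤ r) : Continuous fun u : ℝ => max 0 u ^ r :=
    (continuous_const.max continuous_id).rpow_const fun _ => Or.inr hr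
  have hderiv (u : ℝ) (hu : u ≠ 0) :
      HasDerivAt (fun u : ℝ => max 0 u ^ (q + 1) / (q + 1)) (max 0 u ^ q) u := by
    rcases hu.lt_or_gt with hneg | hpos
    · rw [max_eq_left hneg.le, Real.zero_rpow hq.ne']
      refine (hasDerivAt_const u 0).congr_of_eventuallyEq ?_
      filter_upwards [Iio_mem_nhds hneg] with v hv
      rw [max_eq_left (mem_Iio.1 hv).le, Real.zero_rpow hq1, zero_div]
    · rw [max_eq_right hpos.le]
      have hpow := (Real.hasDerivAt_rpow_const (p := q + 1) (Or.inl hu)).div_const (q + 1)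
      rw [add_sub_cancel_right, mul_div_cancel_left₀ _ hq1] at hpow
      refine hpow.congr_of_eventuallyEq ?_
      filter_upwards [Ioi_mem_nhds hpos] with v hv
      rw [max_eq_right (mem_Ioi.1 hv).le]
  rw [integral_eq_of_hasDerivAt_off_countable _ _ (countable_singleton 0)
    ((hcont (by positivity)).div_const _).continuousOn (fun u hu => hderiv u hu.2)
    ((hcont hq.le).intervalIntegrable _ _), sub_div]

/-- The `q`-th power of the affine function that vanishes at `-A` and equals `1` at `0`,
extended by zero below `-A`. For `A > 0` it is the cross-section function of a cone with
apex `-A`; the truncation is explicit because `Real.rpow` has junk values at negative bases. -/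
noncomputable def coneProfile (A q t : ℝ) : ℝ := max 0 (1 + t / A) ^ q

section coneProfile

variable {A q t : ℝ}

theorem coneProfile_nonneg : 0 ≤ coneProfile A q t := by
  unfold coneProfile; positivity

theorem coneProfile_zero_right : coneProfile A q 0 = 1 := by
  simp [coneProfile]

theorem coneProfile_neg_apex (hA : A ≠ 0) (hq : q ≠ 0) : coneProfile A q (-A) = 0 := by
  simp [coneProfile, hA, hq]

theorem continuous_coneProfile (hq : 0 ≤ q) : Continuous (coneProfile A q) :=
  (by fun_prop : Continuous fun t : ℝ => max 0 (1 + t / A)).rpow_const fun _ => Or.inr hq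

theorem integral_coneProfile (hA : A ≠ 0) (hq : 0 < q) (x y : ℝ) :
    ∫ t in x..y, coneProfile A q t =
      A / (q + 1) * (coneProfile A (q + 1) y - coneProfile A (q + 1) x) := by
  simp only [coneProfile]
  rw [intervalIntegral.integral_comp_add_div (fun u => max 0 u ^ q) hA,
    integral_max_zero_rpow hq, smul_eq_mul]
  ring

theorem mul_coneProfile_inv_le_iff {p c y : ℝ} (hp : 0 < p) (hc : 0 ≤ c) (hy : 0 ≤ y) :
    c * coneProfile A p⁻¹ t ≤ y ↔ c ^ p * (1 + t / A) ≤ y ^ p := by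
  rw [← Real.rpow_le_rpow_iff (mul_nonneg hc coneProfile_nonneg) hy hp,
    Real.mul_rpow hc coneProfile_nonneg, coneProfile,
    Real.rpow_inv_rpow (le_max_left _ _) hp.ne', mul_max_of_nonneg _ _ (by positivity), mul_zero]
  exact max_le_iff.trans (and_iff_right (by positivity))

theorem le_mul_coneProfile_inv {p c y : ℝ} (hp : 0 < p) (hc : 0 ≤ c) (hy : 0 ≤ y)
    (h : y ^ p ≤ c ^ p * (1 + t / A)) : y ≤ c * coneProfile A p⁻¹ t := by
  rw [← Real.rpow_le_rpow_iff hy (mul_nonneg hc coneProfile_nonneg) hp,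
    Real.mul_rpow hc coneProfile_nonneg, coneProfile,
    Real.rpow_inv_rpow (le_max_left _ _) hp.ne']
  exact h.trans (by gcongr; exact le_max_right _ _)

end coneProfile

/-- A nonnegative function `f` on `s` is `p`-concave if `f ^ p` is concave on the support of `f`
in `s`; nonnegativity on `s` is part of the definition. -/
structure PConcaveOn (p : ℝ) (s : Set ℝ) (f : ℝ → ℝ) : Prop where
  nonneg : ∀ t ∈ s, 0 ≤ f t
  concaveOn : ConcaveOn ℝ (s ∩ {t | 0 < f t}) fun t => f t ^ p

namespace PConcaveOn

variable {p a b A : ℝ} {s : Set ℝ} {f : ℝ → ℝ}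

theorem pos_of_mem_Icc (hf : PConcaveOn p s f) {x y t : ℝ} (hx : x ∈ s) (hfx : 0 < f x)
    (hy : y ∈ s) (hfy : 0 < f y) (ht : t ∈ Icc x y) : 0 < f t :=
  (hf.concaveOn.1.ordConnected.out ⟨hx, hfx⟩ ⟨hy, hfy⟩ ht).2

theorem concaveOn_sub_affine (hf : PConcaveOn p s f) (c : ℝ) :
    ConcaveOn ℝ (s ∩ {t | 0 < f t}) fun t => f t ^ p - c * (1 + t / A) := by
  have haffine : ConvexOn ℝ (s ∩ {t | 0 < f t}) fun t => c * (1 + t / A) := by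
    refine ⟨hf.concaveOn.1, fun x _ y _ u v _ _ huv => le_of_eq ?_⟩
    simp only [smul_eq_mul]
    linear_combination (-c) * huv
  exact hf.concaveOn.sub haffine

theorem mul_coneProfile_le (hf : PConcaveOn p s f) (hp : 0 < p) (h0s : 0 ∈ s) (h0 : 0 < f 0)
    {x t : ℝ} (hxs : x ∈ s) (hfx : 0 < f x) (hx : f 0 * coneProfile A p⁻¹ x ≤ f x)
    (ht : t ∈ Icc x 0) : f 0 * coneProfile A p⁻¹ t ≤ f t := by
  rw [mul_coneProfile_inv_le_iff hp h0.le hfx.le] at hx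
  rw [mul_coneProfile_inv_le_iff hp h0.le (hf.pos_of_mem_Icc hxs hfx h0s h0 ht).le]
  have hmin := (hf.concaveOn_sub_affine (A := A) (f 0 ^ p)).min_le_of_mem_Icc
    ⟨hxs, hfx⟩ ⟨h0s, h0⟩ ht
  rw [zero_div, add_zero, mul_one, sub_self, min_eq_right (sub_nonneg.2 hx)] at hmin
  exact sub_nonneg.1 hmin

theorem le_mul_coneProfile (hf : PConcaveOn p s f) (hp : 0 < p) (h0 : 0 < f 0)
    {r t : ℝ} (hrs : r ∈ s) (hr0 : 0 < r) (hfr : 0 < f r)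
    (hr : f 0 * coneProfile A p⁻¹ r ≤ f r) (hts : t ∈ s) (ht0 : t ≤ 0) :
    f t ≤ f 0 * coneProfile A p⁻¹ t := by
  rcases (hf.nonneg t hts).eq_or_lt with hft | hft
  · rw [← hft]
    exact mul_nonneg h0.le coneProfile_nonneg
  rw [mul_coneProfile_inv_le_iff hp h0.le hfr.le] at hr
  refine le_mul_coneProfile_inv hp h0.le hft.le (sub_nonpos.1 ?_)
  have hleft := (hf.concaveOn_sub_affine (A := A) (f 0 ^ p)).left_le_of_le_right''
    ⟨hts, hft⟩ ⟨hrs, hfr⟩ ht0 hr0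
  rw [zero_div, add_zero, mul_one, sub_self] at hleft
  exact hleft (sub_nonneg.2 hr)

theorem le_integral_of_mul_coneProfile_le (hf : PConcaveOn p (Icc a b) f) (hp : 0 < p)
    (hfi : IntervalIntegrable f volume a b) (h0s : 0 ∈ Icc a b) (h0 : 0 < f 0) (hA : A ≠ 0)
    {x t : ℝ} (hax : a ≤ x) (hfx : 0 < f x) (hx : f 0 * coneProfile A p⁻¹ x ≤ f x)
    (ht : t ∈ Icc x 0) :
    f 0 * (A / (p⁻¹ + 1) * (1 - coneProfile A (p⁻¹ + 1) t)) ≤ ∫ u in t..0, f u := by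
  have hxs : x ∈ Icc a b := ⟨hax, (ht.1.trans ht.2).trans h0s.2⟩
  have hfi' : IntervalIntegrable f volume t 0 := hfi.mono_set <| uIcc_subset_uIcc
    (mem_uIcc_of_le (hax.trans ht.1) (ht.2.trans h0s.2)) (Icc_subset_uIcc h0s)
  calc f 0 * (A / (p⁻¹ + 1) * (1 - coneProfile A (p⁻¹ + 1) t))
      = ∫ u in t..0, f 0 * coneProfile A p⁻¹ u := by
        rw [intervalIntegral.integral_const_mul, integral_coneProfile hA (inv_pos.2 hp),
          coneProfile_zero_right]
    _ ≤ ∫ u in t..0, f u :=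
        intervalIntegral.integral_mono_on ht.2
          (((continuous_coneProfile (inv_pos.2 hp).le).const_mul _).intervalIntegrable _ _)
          hfi' fun u hu =>
            hf.mul_coneProfile_le hp h0s h0 hxs hfx hx ⟨ht.1.trans hu.1, hu.2⟩

theorem mul_neg_le_integral (hf : PConcaveOn p (Icc a b) f) (hp : 0 < p)
    (hfi : IntervalIntegrable f volume a b) (h0s : 0 ∈ Icc a b) (h0 : 0 < f 0)
    {x : ℝ} (hax : a ≤ x) (hx0 : x < 0) (hfx : 0 < f x) :
    f 0 * (-x / (p⁻¹ + 1)) ≤ ∫ t in a..0, f t := by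
  -- Compare `f` with the cone whose apex is the point `x` itself.
  have hapex {q : ℝ} (hq : 0 < q) : coneProfile (-x) q x = 0 := by
    simpa only [neg_neg] using coneProfile_neg_apex (neg_ne_zero.2 hx0.ne) hq.ne'
  have hx : f 0 * coneProfile (-x) p⁻¹ x ≤ f x := by
    rw [hapex (inv_pos.2 hp), mul_zero]
    exact hfx.le
  calc f 0 * (-x / (p⁻¹ + 1)) ≤ ∫ t in x..0, f t := by
        simpa only [hapex (show 0 < p⁻¹ + 1 by positivity), sub_zero, mul_one] using
          hf.le_integral_of_mul_coneProfile_le hp hfi h0s h0 (neg_ne_zero.2 hx0.ne) hax hfx hx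
            (left_mem_Icc.2 hx0.le)
    _ ≤ ∫ t in a..0, f t := by
        refine intervalIntegral.integral_mono_interval hax hx0.le le_rfl ?_
          (hfi.mono_set (uIcc_subset_uIcc_left (Icc_subset_uIcc h0s)))
        filter_upwards [ae_restrict_mem measurableSet_Ioc] with t ht
        exact hf.nonneg t ⟨ht.1.le, ht.2.trans h0s.2⟩

theorem integral_le_of_mul_coneProfile_le (hf : PConcaveOn p (Icc a b) f) (hp : 0 < p)
    (hfi : IntervalIntegrable f volume a b) (ha : a ≤ 0) (h0 : 0 < f 0) (hA : 0 < A)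
    {r : ℝ} (hr : r ∈ Ioc 0 b) (hfr : 0 < f r) (hle : f 0 * coneProfile A p⁻¹ r ≤ f r) :
    ∫ t in a..0, f t ≤ f 0 * (A / (p⁻¹ + 1)) := by
  have h0b : 0 ≤ b := hr.1.le.trans hr.2
  calc ∫ t in a..0, f t ≤ ∫ t in a..0, f 0 * coneProfile A p⁻¹ t :=
        intervalIntegral.integral_mono_on ha
          (hfi.mono_set (uIcc_subset_uIcc_left (mem_uIcc_of_le ha h0b)))
          (((continuous_coneProfile (inv_pos.2 hp).le).const_mul _).intervalIntegrable _ _)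
          fun t ht => hf.le_mul_coneProfile hp h0 ⟨ha.trans hr.1.le, hr.2⟩ hr.1 hfr hle
            ⟨ht.1, ht.2.trans h0b⟩ ht.2
    _ = f 0 * (A / (p⁻¹ + 1) * (1 - coneProfile A (p⁻¹ + 1) a)) := by
        rw [intervalIntegral.integral_const_mul, integral_coneProfile hA.ne' (inv_pos.2 hp),
          coneProfile_zero_right]
    _ ≤ f 0 * (A / (p⁻¹ + 1)) := by
        gcongr
        exact mul_le_of_le_one_right (by positivity) (sub_le_self _ coneProfile_nonneg)

theorem le_mul_coneProfile_of_integral_eq (hf : PConcaveOn p (Icc a b) f) (hp : 0 < p)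
    (hfi : IntervalIntegrable f volume a b) (ha : a ≤ 0) (h0 : 0 < f 0) (hA : 0 < A)
    (hmass : ∫ t in a..0, f t = f 0 * (A / (p⁻¹ + 1))) {r : ℝ} (hr : r ∈ Icc 0 b) :
    f r ≤ f 0 * coneProfile A p⁻¹ r := by
  have hfr0 : 0 ≤ f r := hf.nonneg r ⟨ha.trans hr.1, hr.2⟩
  refine le_mul_coneProfile_inv hp h0.le hfr0 ?_
  have hc : 0 < f 0 ^ p := by positivity
  rcases le_or_gt (f r ^ p) (f 0 ^ p) with hle | hgt
  · exact hle.trans (le_mul_of_one_le_right hc.le (by linarith [div_nonneg hr.1 hA.le]))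
  have hfr : f 0 < f r := (Real.rpow_lt_rpow_iff h0.le hfr0 hp).1 hgt
  have hr0 : 0 < r := hr.1.lt_of_ne fun h => hfr.ne (by rw [h])
  -- The line through `(0, f 0 ^ p)` and `(r, f r ^ p)` vanishes at `-B`.
  obtain ⟨B, hB, hline⟩ : ∃ B > 0, f r ^ p = f 0 ^ p * (1 + r / B) := by
    have hdiff : 0 < f r ^ p - f 0 ^ p := sub_pos.2 hgt
    exact ⟨r * f 0 ^ p / (f r ^ p - f 0 ^ p), div_pos (by positivity) hdiff, by field_simp; ring⟩
  have hAB : A ≤ B := by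
    have hle := hf.integral_le_of_mul_coneProfile_le hp hfi ha h0 hB ⟨hr0, hr.2⟩ (h0.trans hfr)
      ((mul_coneProfile_inv_le_iff hp h0.le hfr0).2 hline.ge)
    rw [hmass] at hle
    exact (div_le_div_iff_of_pos_right (by positivity)).1 (le_of_mul_le_mul_left hle h0)
  rw [hline]
  gcongr

theorem integral_le_mul_coneProfile_of_nonneg (hf : PConcaveOn p (Icc a b) f) (hp : 0 < p)
    (hfi : IntervalIntegrable f volume a b) (ha : a ≤ 0) (h0 : 0 < f 0) (hA : 0 < A)
    (hmass : ∫ t in a..0, f t = f 0 * (A / (p⁻¹ + 1))) {t : ℝ} (ht : t ∈ Icc 0 b) :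
    ∫ u in a..t, f u ≤ (∫ u in a..0, f u) * coneProfile A (p⁻¹ + 1) t := by
  have h0b : (0 : ℝ) ∈ uIcc a b := mem_uIcc_of_le ha (ht.1.trans ht.2)
  have htb : t ∈ uIcc a b := mem_uIcc_of_le (ha.trans ht.1) ht.2
  have hfi0t : IntervalIntegrable f volume 0 t := hfi.mono_set (uIcc_subset_uIcc h0b htb)
  have hright : ∫ u in (0 : ℝ)..t, f u ≤ ∫ u in (0 : ℝ)..t, f 0 * coneProfile A p⁻¹ u :=
    intervalIntegral.integral_mono_on ht.1 hfi0t
      (((continuous_coneProfile (inv_pos.2 hp).le).const_mul _).intervalIntegrable _ _)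
      fun u hu => hf.le_mul_coneProfile_of_integral_eq hp hfi ha h0 hA hmass
        ⟨hu.1, hu.2.trans ht.2⟩
  rw [intervalIntegral.integral_const_mul, integral_coneProfile hA.ne' (inv_pos.2 hp),
    coneProfile_zero_right] at hright
  rw [← intervalIntegral.integral_add_adjacent_intervals
    (hfi.mono_set (uIcc_subset_uIcc_left h0b)) hfi0t, hmass]
  linarith

theorem integral_le_mul_coneProfile_of_nonpos (hf : PConcaveOn p (Icc a b) f) (hp : 0 < p)
    (hfi : IntervalIntegrable f volume a b) (hb : 0 ≤ b) (h0 : 0 < f 0) (hA : 0 < A)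
    (hmass : ∫ t in a..0, f t = f 0 * (A / (p⁻¹ + 1))) {t : ℝ} (ht : t ∈ Icc a 0) :
    ∫ u in a..t, f u ≤ (∫ u in a..0, f u) * coneProfile A (p⁻¹ + 1) t := by
  have h0s : (0 : ℝ) ∈ Icc a b := ⟨ht.1.trans ht.2, hb⟩
  have hts : t ∈ uIcc a b := mem_uIcc_of_le ht.1 (ht.2.trans hb)
  have hfiat : IntervalIntegrable f volume a t := hfi.mono_set (uIcc_subset_uIcc_left hts)
  by_cases hcross : ∃ x ∈ Icc a t, f 0 * coneProfile A p⁻¹ x < f x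
  · -- `f` dominates the cone on `[t, 0]`, and both have the same mass left of `0`.
    obtain ⟨x, hx, hlt⟩ := hcross
    have hfx : 0 < f x := (mul_nonneg h0.le coneProfile_nonneg).trans_lt hlt
    have hle := hf.le_integral_of_mul_coneProfile_le hp hfi h0s h0 hA.ne' hx.1 hfx hlt.le
      ⟨hx.2, ht.2⟩
    have hsplit := intervalIntegral.integral_add_adjacent_intervals hfiat
      (hfi.mono_set (uIcc_subset_uIcc hts (Icc_subset_uIcc h0s)))
    rw [hmass] at hsplit ⊢
    linarith
  · push Not at hcross
    calc ∫ u in a..t, f u ≤ ∫ u in a..t, f 0 * coneProfile A p⁻¹ u :=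
          intervalIntegral.integral_mono_on ht.1 hfiat
            (((continuous_coneProfile (inv_pos.2 hp).le).const_mul _).intervalIntegrable _ _) hcross
      _ = f 0 * (A / (p⁻¹ + 1) *
            (coneProfile A (p⁻¹ + 1) t - coneProfile A (p⁻¹ + 1) a)) := by
          rw [intervalIntegral.integral_const_mul, integral_coneProfile hA.ne' (inv_pos.2 hp)]
      _ ≤ f 0 * (A / (p⁻¹ + 1) * coneProfile A (p⁻¹ + 1) t) := by
          gcongr
          exact sub_le_self _ coneProfile_nonneg
      _ = (∫ u in a..0, f u) * coneProfile A (p⁻¹ + 1) t := by rw [hmass, mul_assoc]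

theorem exists_rpow_integral_le_affine (hf : PConcaveOn p (Icc a b) f) (hp : 0 < p)
    (hfi : IntervalIntegrable f volume a b) (hb : 0 ≤ b) (h0 : 0 < f 0)
    {x : ℝ} (hx : x ∈ Ico a 0) (hfx : 0 < f x) :
    ∃ A, ∀ t ∈ Icc a b, 0 < f t → (∫ u in a..t, f u) ^ (p⁻¹ + 1)⁻¹ ≤
      (∫ u in a..0, f u) ^ (p⁻¹ + 1)⁻¹ * (1 + t / A) := by
  have hq : 0 < p⁻¹ + 1 := by positivity
  have h0s : (0 : ℝ) ∈ Icc a b := ⟨hx.1.trans hx.2.le, hb⟩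
  obtain ⟨A, hmass⟩ : ∃ A, ∫ u in a..0, f u = f 0 * (A / (p⁻¹ + 1)) :=
    ⟨(p⁻¹ + 1) * (∫ u in a..0, f u) / f 0, by field_simp⟩
  have hneg_le {y : ℝ} (hy : y ∈ Ico a 0) (hfy : 0 < f y) : -y ≤ A := by
    have hle := hf.mul_neg_le_integral hp hfi h0s h0 hy.1 hy.2 hfy
    rw [hmass] at hle
    exact (div_le_div_iff_of_pos_right hq).1 (le_of_mul_le_mul_left hle h0)
  have hA : 0 < A := (neg_pos.2 hx.2).trans_le (hneg_le hx hfx)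
  refine ⟨A, fun t ht hft => ?_⟩
  have hline : 0 ≤ 1 + t / A := by
    rcases lt_or_ge t 0 with hneg | hnonneg
    · linarith [(div_le_one hA).2 (hneg_le ⟨ht.1, hneg⟩ hft), neg_div A t]
    · positivity
  have hcone : ∫ u in a..t, f u ≤ (∫ u in a..0, f u) * coneProfile A (p⁻¹ + 1) t := by
    rcases le_total t 0 with hneg | hnonneg
    · exact hf.integral_le_mul_coneProfile_of_nonpos hp hfi hb h0 hA hmass ⟨ht.1, hneg⟩
    · exact hf.integral_le_mul_coneProfile_of_nonneg hp hfi h0s.1 h0 hA hmass ⟨hnonneg, ht.2⟩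
  have hVt : 0 ≤ ∫ u in a..t, f u :=
    intervalIntegral.integral_nonneg ht.1 fun u hu => hf.nonneg u ⟨hu.1, hu.2.trans ht.2⟩
  have hV0 : 0 ≤ ∫ u in a..0, f u := by rw [hmass]; positivity
  calc (∫ u in a..t, f u) ^ (p⁻¹ + 1)⁻¹
      ≤ ((∫ u in a..0, f u) * coneProfile A (p⁻¹ + 1) t) ^ (p⁻¹ + 1)⁻¹ := by gcongr
    _ = (∫ u in a..0, f u) ^ (p⁻¹ + 1)⁻¹ * (1 + t / A) := by
        rw [Real.mul_rpow hV0 coneProfile_nonneg, coneProfile,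
          Real.rpow_rpow_inv (le_max_left _ _) hq.ne', max_eq_right hline]

end PConcaveOn

theorem rpow_inv_le_integral_div_integral_of_centroid {f : ℝ → ℝ} {a b s A : ℝ} (hs : 0 < s)
    (hfi : IntervalIntegrable f volume a b) (h0s : 0 ∈ Icc a b) (hnn : ∀ t ∈ Icc a b, 0 ≤ f t)
    (hpos : 0 < ∫ t in a..b, f t) (hcent : ∫ t in a..b, t * f t = 0)
    (haffine_le : ∀ t ∈ Icc a b, 0 < f t →
      (∫ u in a..t, f u) ^ s ≤ (∫ u in a..0, f u) ^ s * (1 + t / A)) :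
    (s + 1)⁻¹ ^ s⁻¹ ≤ (∫ t in a..0, f t) / ∫ t in a..b, f t := by
  have hab : a ≤ b := h0s.1.trans h0s.2
  have hm : 0 ≤ ∫ t in a..0, f t :=
    intervalIntegral.integral_nonneg h0s.1 fun t ht => hnn t ⟨ht.1, ht.2.trans h0s.2⟩
  set m := ∫ t in a..0, f t
  set M := ∫ t in a..b, f t
  have hVcont : ContinuousOn (fun t => (∫ u in a..t, f u) ^ s) (uIcc a b) :=
    (intervalIntegral.continuousOn_primitive_interval' hfi left_mem_uIcc).rpow_const
      fun _ _ => Or.inr hs.le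
  have htfi : IntervalIntegrable (fun t => t * f t) volume a b :=
    hfi.continuousOn_mul continuousOn_id
  have hexpand (t : ℝ) : m ^ s * (1 + t / A) * f t = m ^ s * f t + m ^ s / A * (t * f t) := by
    ring
  have hkey : M ^ s * M / (s + 1) ≤ m ^ s * M := by
    calc M ^ s * M / (s + 1) = ∫ t in a..b, (∫ u in a..t, f u) ^ s * f t := by
          rw [integral_rpow_primitive_mul hfi hs.le, Real.rpow_add_one hpos.ne']
      _ ≤ ∫ t in a..b, m ^ s * (1 + t / A) * f t := by
          refine intervalIntegral.integral_mono_on hab (hfi.continuousOn_mul hVcont)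
            (hfi.continuousOn_mul (by fun_prop)) fun t ht => ?_
          rcases (hnn t ht).eq_or_lt with hft | hft
          · simp only [← hft, mul_zero, le_refl]
          · exact mul_le_mul_of_nonneg_right (haffine_le t ht hft) hft.le
      _ = m ^ s * M := by
          simp only [hexpand]
          rw [intervalIntegral.integral_add (hfi.const_mul _) (htfi.const_mul _),
            intervalIntegral.integral_const_mul, intervalIntegral.integral_const_mul, hcent,
            mul_zero, add_zero]
  rw [Real.rpow_inv_le_iff_of_pos (by positivity) (by positivity) hs,
    Real.div_rpow hm hpos.le, le_div_iff₀ (by positivity), inv_mul_eq_div]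
  refine le_of_mul_le_mul_right ?_ hpos
  rwa [div_mul_eq_mul_div]

theorem frequently_neg_and_pos_of_integral_mul_eq_zero {α : Type*} [MeasurableSpace α]
    {μ : Measure α} {w f : α → ℝ} (hw : ∀ᵐ x ∂μ, w x ≠ 0) (hf : 0 ≤ᵐ[μ] f)
    (hwf : Integrable (fun x => w x * f x) μ) (hpos : 0 < ∫ x, f x ∂μ)
    (hcent : ∫ x, w x * f x ∂μ = 0) :
    ∃ᶠ x in ae μ, w x < 0 ∧ 0 < f x := by
  intro hnot
  have hwf_nonneg : 0 ≤ᵐ[μ] fun x => w x * f x := by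
    filter_upwards [hnot, hf] with x hx hfx
    rcases hfx.eq_or_lt with hzero | hfpos
    · exact (mul_eq_zero_of_right _ hzero.symm).ge
    · exact mul_nonneg (not_lt.1 fun hwx => hx ⟨hwx, hfpos⟩) hfx
  have hwf_zero := (integral_eq_zero_iff_of_nonneg_ae hwf_nonneg hwf).1 hcent
  refine hpos.ne' (integral_eq_zero_of_ae ?_)
  filter_upwards [hwf_zero, hw] with x hx hwx using (mul_eq_zero.1 hx).resolve_left hwx

theorem exists_pos_on_both_sides_of_centroid {f : ℝ → ℝ} {a b c : ℝ} (hab : a ≤ b)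
    (hnn : ∀ t ∈ Icc a b, 0 ≤ f t) (hfi : IntervalIntegrable f volume a b)
    (hpos : 0 < ∫ t in a..b, f t) (hcent : ∫ t in a..b, (t - c) * f t = 0) :
    (∃ x ∈ Ico a c, 0 < f x) ∧ ∃ y ∈ Ioc c b, 0 < f y := by
  have hne : ∀ᵐ t ∂volume.restrict (Ioc a b), t ≠ c := ae_restrict_of_ae (Measure.ae_ne volume c)
  have hmem := ae_restrict_mem (μ := volume) (measurableSet_Ioc (a := a) (b := b))
  have hnn' : 0 ≤ᵐ[volume.restrict (Ioc a b)] f := by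
    filter_upwards [hmem] with t ht using hnn t (Ioc_subset_Icc_self ht)
  have hwfi : IntervalIntegrable (fun t => (t - c) * f t) volume a b :=
    hfi.continuousOn_mul (by fun_prop)
  rw [intervalIntegral.integral_of_le hab] at hpos hcent
  constructor
  · obtain ⟨x, ⟨hxc, hfx⟩, hx⟩ := ((frequently_neg_and_pos_of_integral_mul_eq_zero
      (hne.mono fun t => sub_ne_zero.2) hnn' hwfi.1 hpos hcent).and_eventually hmem).exists
    exact ⟨x, ⟨hx.1.le, sub_neg.1 hxc⟩, hfx⟩
  · have hcent' : ∫ t in Ioc a b, (c - t) * f t = 0 := by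
      rw [← neg_eq_zero, ← integral_neg, ← hcent]
      congr with t
      ring
    have hwfi' : IntervalIntegrable (fun t => (c - t) * f t) volume a b :=
      hfi.continuousOn_mul (by fun_prop)
    obtain ⟨y, ⟨hyc, hfy⟩, hy⟩ := ((frequently_neg_and_pos_of_integral_mul_eq_zero
      (hne.mono fun t ht => sub_ne_zero.2 ht.symm) hnn' hwfi'.1 hpos hcent').and_eventually
        hmem).exists
    exact ⟨y, ⟨sub_neg.1 hyc, hy.2⟩, hfy⟩

theorem stmt_2 (a b p : ℝ) (f : ℝ → ℝ) (ha : a < 0) (hb : 0 < b)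
    (hp : 0 < p)
    (hnn : ∀ t ∈ Set.Icc a b, 0 ≤ f t)
    (hconc : ConcaveOn ℝ (Set.Icc a b ∩ {t | 0 < f t}) (fun t => f t ^ p))
    (hint : 0 < ∫ t in a..b, f t)
    (hcent : (∫ t in a..b, t * f t) / (∫ t in a..b, f t) = 0) :
    (∫ t in a..(0 : ℝ), f t) / (∫ t in a..b, f t) ≥
      ((p + 1) / (2 * p + 1)) ^ ((p + 1) / p) := by
  have hf : PConcaveOn p (Icc a b) f := ⟨hnn, hconc⟩
  have hfi : IntervalIntegrable f volume a b :=
    intervalIntegral.intervalIntegrable_of_integral_ne_zero hint.ne'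
  have hmoment : ∫ t in a..b, t * f t = 0 := (div_eq_zero_iff.1 hcent).resolve_right hint.ne'
  obtain ⟨⟨x, hx, hfx⟩, y, hy, hfy⟩ := exists_pos_on_both_sides_of_centroid (c := 0)
    (ha.trans hb).le hnn hfi hint (by simpa only [sub_zero] using hmoment)
  have h0 : 0 < f 0 := hf.pos_of_mem_Icc ⟨hx.1, (hx.2.trans hb).le⟩ hfx
    ⟨(ha.trans hy.1).le, hy.2⟩ hfy ⟨hx.2.le, hy.1.le⟩
  obtain ⟨A, haffine_le⟩ := hf.exists_rpow_integral_le_affine hp hfi hb.le h0 hx hfx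
  have hratio := rpow_inv_le_integral_div_integral_of_centroid (by positivity) hfi
    ⟨ha.le, hb.le⟩ hnn hint hmoment haffine_le
  have hbase : ((p⁻¹ + 1)⁻¹ + 1)⁻¹ = (p + 1) / (2 * p + 1) := by field_simp; ring
  have hexponent : (p⁻¹ + 1)⁻¹⁻¹ = (p + 1) / p := by field_simp; ring
  rwa [hbase, hexponent] at hratio
end

section
/- Let f:[-b,b]→[0,∞) be a p-concave function for some p>0, with positive integral, whose support is [-b,b] (midpoint at 0). Then (∫_{-b}^0 f(t) dt)/(∫_{-b}^b f(t) dt) ≥ (1/2)^{(p+1)/p}. -/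
/-!
Contracting towards a point `a` by a factor `θ` cannot shrink a nonnegative concave function by more
than the factor `θ`, since the value at `a` contributes nonnegatively to the convex combination.
Hence a `p`-concave `f` satisfies `θ ^ (1 / p) * f s ≤ f (a + θ * (s - a))`. Integrating over
`s ∈ (a, c)`, with a further factor `θ` from the change of variables, gives
`θ ^ ((p + 1) / p) * ∫_a^c f ≤ ∫_a^{a + θ (c - a)} f`; the theorem is the case `θ = 1 / 2`.
-/

open AffineMap MeasureTheory Set Filter Topology

section VectorSpace

variable {E F : Type*} [AddCommGroup E] [Module ℝ E] [AddCommGroup F] [Module ℝ F]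

theorem mul_le_homothety_of_concaveOn_of_nonneg {s : Set E} {g : E → ℝ} (hg : ConcaveOn ℝ s g)
    (hg₀ : ∀ x ∈ s, 0 ≤ g x) {a x : E} (hx : x ∈ s) (hax : openSegment ℝ a x ⊆ s)
    {θ : ℝ} (hθ₀ : 0 < θ) (hθ₁ : θ ≤ 1) : θ * g x ≤ g (homothety a θ x) := by
  obtain rfl | hθ₁ := hθ₁.eq_or_lt
  · simp
  -- `a` need not lie in `s`, so it is replaced by `homothety a ε x`, and `ε` tends to `0`.
  have bound (ε : ℝ) (hε : ε ∈ Ioo 0 θ) : (θ - ε) / (1 - ε) * g x ≤ g (homothety a θ x) := by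
    have hε₁ : 0 < 1 - ε := by linarith [hε.2]
    have hmem : homothety a ε x ∈ s :=
      hax (lineMap_mem_openSegment ℝ a x ⟨hε.1, hε.2.trans hθ₁⟩)
    have hcomb : ((1 - θ) / (1 - ε)) • homothety a ε x + ((θ - ε) / (1 - ε)) • x
        = homothety a θ x := by
      simp only [homothety_apply, vsub_eq_sub, vadd_eq_add]
      match_scalars <;> field_simp <;> ring
    have hweight : 0 ≤ (1 - θ) / (1 - ε) := div_nonneg (by linarith) hε₁.le
    calc (θ - ε) / (1 - ε) * g x
        ≤ (1 - θ) / (1 - ε) * g (homothety a ε x) + (θ - ε) / (1 - ε) * g x :=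
          le_add_of_nonneg_left (mul_nonneg hweight (hg₀ _ hmem))
      _ ≤ g (((1 - θ) / (1 - ε)) • homothety a ε x + ((θ - ε) / (1 - ε)) • x) :=
          hg.2 hmem hx hweight (div_nonneg (by linarith [hε.2]) hε₁.le) (by field_simp; ring)
      _ = g (homothety a θ x) := by rw [hcomb]
  have hlim : Tendsto (fun ε : ℝ => (θ - ε) / (1 - ε) * g x) (𝓝[>] 0) (𝓝 (θ * g x)) := by
    have hcont : ContinuousAt (fun ε : ℝ => (θ - ε) / (1 - ε) * g x) 0 := by
      fun_prop (disch := norm_num)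
    simpa using hcont.tendsto.mono_left nhdsWithin_le_nhds
  exact le_of_tendsto hlim (mem_of_superset (Ioo_mem_nhdsGT hθ₀) bound)

/-- `p`-concavity on `s`, for an exponent `p > 0`: the function `f` is nonnegative on `s` and its
power `f ^ p` is concave there. Vanishing is allowed, so that no support needs to be specified. -/
structure PowConcaveOn (p : ℝ) (s : Set E) (f : E → ℝ) : Prop where
  nonneg : ∀ x ∈ s, 0 ≤ f x
  concaveOn_rpow : ConcaveOn ℝ s fun x => f x ^ p

namespace PowConcaveOn

variable {p : ℝ} {s t : Set E} {f : E → ℝ}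

theorem subset (hf : PowConcaveOn p t f) (hst : s ⊆ t) (hs : Convex ℝ s) :
    PowConcaveOn p s f :=
  ⟨fun x hx => hf.nonneg x (hst hx), hf.concaveOn_rpow.subset hst hs⟩

theorem comp_affineMap (hf : PowConcaveOn p s f) (φ : F →ᵃ[ℝ] E) :
    PowConcaveOn p (φ ⁻¹' s) (f ∘ φ) :=
  ⟨fun x hx => hf.nonneg (φ x) hx, hf.concaveOn_rpow.comp_affineMap φ⟩

theorem rpow_mul_le_homothety (hf : PowConcaveOn p s f) (hp : 0 < p) {a x : E} (hx : x ∈ s)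
    (hax : openSegment ℝ a x ⊆ s) {θ : ℝ} (hθ₀ : 0 < θ) (hθ₁ : θ ≤ 1) :
    θ ^ (1 / p) * f x ≤ f (homothety a θ x) := by
  have hmem : homothety a θ x ∈ s := by
    obtain rfl | hθ₁ := hθ₁.eq_or_lt
    · simpa using hx
    · exact hax (lineMap_mem_openSegment ℝ a x ⟨hθ₀, hθ₁⟩)
  have hpow : (θ ^ (1 / p) * f x) ^ p ≤ f (homothety a θ x) ^ p :=
    calc (θ ^ (1 / p) * f x) ^ p = θ * f x ^ p := by
          rw [Real.mul_rpow (by positivity) (hf.nonneg x hx), ← Real.rpow_mul hθ₀.le,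
            one_div_mul_cancel hp.ne', Real.rpow_one]
      _ ≤ f (homothety a θ x) ^ p :=
          mul_le_homothety_of_concaveOn_of_nonneg hf.concaveOn_rpow
            (fun y hy => Real.rpow_nonneg (hf.nonneg y hy) p) hx hax hθ₀ hθ₁
  exact (Real.rpow_le_rpow_iff (mul_nonneg (by positivity) (hf.nonneg x hx))
    (hf.nonneg _ hmem) hp).1 hpow

end PowConcaveOn

end VectorSpace

theorem PowConcaveOn.continuousOn {E : Type*} [NormedAddCommGroup E] [NormedSpace ℝ E]
    [FiniteDimensional ℝ E] {p : ℝ} {s : Set E} {f : E → ℝ} (hf : PowConcaveOn p s f)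
    (hp : 0 < p) (hs : IsOpen s) : ContinuousOn f s :=
  ((hf.concaveOn_rpow.continuousOn hs).rpow_const
    fun _ _ => Or.inr (inv_nonneg.2 hp.le)).congr
    fun x hx => (Real.rpow_rpow_inv (hf.nonneg x hx) hp.ne').symm

section Interval

variable {a c p θ : ℝ} {f : ℝ → ℝ}

theorem mapsTo_homothety_Ioo (hθ₀ : 0 < θ) (hθ₁ : θ ≤ 1) :
    MapsTo (homothety a θ) (Ioo a c) (Ioo a c) := by
  rintro x ⟨hax, hxc⟩
  have hpos : 0 < θ * (x - a) := mul_pos hθ₀ (sub_pos.2 hax)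
  have hle : θ * (x - a) ≤ x - a := mul_le_of_le_one_left (sub_pos.2 hax).le hθ₁
  simp only [homothety_eq_lineMap, lineMap_apply_ring']
  constructor <;> linarith

theorem mul_integral_comp_homothety (f : ℝ → ℝ) (a c θ : ℝ) :
    θ * ∫ s in a..c, f (homothety a θ s) = ∫ t in a..homothety a θ c, f t := by
  have happly (s : ℝ) : homothety a θ s = θ * s + (a - θ * a) := by
    simp only [homothety_eq_lineMap, lineMap_apply_ring']
    ring
  simp only [happly, intervalIntegral.mul_integral_comp_mul_add, add_sub_cancel]

namespace PowConcaveOn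

theorem le_two_rpow_mul_midpoint (hf : PowConcaveOn p (Ioo a c) f) (hp : 0 < p) {t : ℝ}
    (ht : t ∈ Ioo a c) : f t ≤ 2 ^ (1 / p) * f (midpoint ℝ a c) := by
  have hreflect : a + c - t ∈ Ioo a c := ⟨by linarith [ht.2], by linarith [ht.1]⟩
  have hmid : homothety (a + c - t) (1 / 2 : ℝ) t = midpoint ℝ a c := by
    simp only [homothety_eq_lineMap, lineMap_apply_ring', midpoint_eq_smul_add, invOf_eq_inv,
      smul_eq_mul]
    ring
  have hhalf : (1 / 2) ^ (1 / p) * f t ≤ f (midpoint ℝ a c) :=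
    hmid ▸ hf.rpow_mul_le_homothety hp ht ((convex_Ioo a c).openSegment_subset hreflect ht)
      one_half_pos one_half_lt_one.le
  rwa [one_div 2, Real.inv_rpow zero_le_two, inv_mul_le_iff₀ (by positivity)] at hhalf

theorem intervalIntegrable (hf : PowConcaveOn p (Ioo a c) f) (hp : 0 < p) (hac : a ≤ c) :
    IntervalIntegrable f volume a c := by
  rw [intervalIntegrable_iff_integrableOn_Ioo_of_le hac]
  refine IntegrableOn.of_bound measure_Ioo_lt_top
    ((hf.continuousOn hp isOpen_Ioo).aestronglyMeasurable measurableSet_Ioo)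
    (2 ^ (1 / p) * f (midpoint ℝ a c)) ?_
  filter_upwards [ae_restrict_mem measurableSet_Ioo] with t ht
  rw [Real.norm_of_nonneg (hf.nonneg t ht)]
  exact hf.le_two_rpow_mul_midpoint hp ht

end PowConcaveOn

theorem stmt_3_general (hf : PowConcaveOn p (Ioo a c) f) (hp : 0 < p) (hac : a ≤ c)
    (hθ₀ : 0 < θ) (hθ₁ : θ ≤ 1) :
    θ ^ ((p + 1) / p) * ∫ t in a..c, f t ≤ ∫ t in a..homothety a θ c, f t := by
  have hcontracted : PowConcaveOn p (Ioo a c) (f ∘ homothety a θ) :=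
    (hf.comp_affineMap (homothety a θ)).subset (mapsTo_homothety_Ioo hθ₀ hθ₁) (convex_Ioo a c)
  have hpointwise (s : ℝ) (hs : s ∈ Ioo a c) : θ ^ (1 / p) * f s ≤ f (homothety a θ s) := by
    refine hf.rpow_mul_le_homothety hp hs ?_ hθ₀ hθ₁
    rw [openSegment_eq_Ioo hs.1]
    exact Ioo_subset_Ioo_right hs.2.le
  calc θ ^ ((p + 1) / p) * ∫ t in a..c, f t
      = θ * ∫ s in a..c, θ ^ (1 / p) * f s := by
        rw [add_div, div_self hp.ne', Real.rpow_add hθ₀, Real.rpow_one, mul_assoc,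
          intervalIntegral.integral_const_mul]
    _ ≤ θ * ∫ s in a..c, f (homothety a θ s) := by
        refine mul_le_mul_of_nonneg_left ?_ hθ₀.le
        exact intervalIntegral.integral_mono_on_of_le_Ioo hac
          ((hf.intervalIntegrable hp hac).const_mul _) (hcontracted.intervalIntegrable hp hac)
          hpointwise
    _ = ∫ t in a..homothety a θ c, f t := mul_integral_comp_homothety f a c θ

end Interval

theorem stmt_3 (b p : ℝ) (f : ℝ → ℝ) (hb : 0 < b) (hp : 0 < p)
    (hnn : ∀ t ∈ Set.Icc (-b) b, 0 ≤ f t)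
    (hsupp : ∀ t ∈ Set.Ioo (-b) b, 0 < f t)
    (hconc : ConcaveOn ℝ (Set.Ioo (-b) b) (fun t => f t ^ p))
    (hint : 0 < ∫ t in (-b)..b, f t) :
    (∫ t in (-b)..(0 : ℝ), f t) / (∫ t in (-b)..b, f t) ≥
      ((1 : ℝ) / 2) ^ ((p + 1) / p) := by
  have hf : PowConcaveOn p (Ioo (-b) b) f := ⟨fun t ht => (hsupp t ht).le, hconc⟩
  have hzero : homothety (-b) (1 / 2 : ℝ) b = 0 := by
    simp only [homothety_eq_lineMap, lineMap_apply_ring']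
    ring
  rw [ge_iff_le, le_div_iff₀ hint, ← hzero]
  exact stmt_3_general hf hp (by linarith) one_half_pos one_half_lt_one.le
end

section
/- Let r>0 and p>0, and let f:[a,b]→[0,∞) be a p-concave function with positive integral such that a<0<b and (∫_a^b t f(t)^r dt)/(∫_a^b f(t)^r dt) = 0. Then (∫_a^0 f(t) dt)/(∫_a^b f(t) dt) ≥ (p/(2p+r))^{(p+1)/p}. -/
/-!
Put `g = f ^ p`, which is concave and positive on the interior `(α, β)` of the support of `f`.

* Let `ℓ` be the affine function that vanishes at `β` and agrees with `g` at
  `c = α + (β - α) / (s + 2)`. By concavity `g ≤ ℓ` to the left of `c` and `ℓ ≤ g` to its right.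
  As `c` is the centroid of `ℓ ^ s`, the centroid of `g ^ s` is at least `c`. For `s = r / p` this
  says that the centroid of `f ^ r` is at least `α + k * (β - α)`, where `k = p / (2 * p + r)`.
* Contracting `(α, β)` towards `α` by the factor `k` decreases `g` at most by the factor `k`.
  Substituting in the integral of `f = g ^ (1 / p)`, the interval `(α, α + k * (β - α))` carries at
  least the fraction `k ^ (1 / p + 1)` of the integral of `f`.
-/

open AffineMap (homothety homothety_apply)
open MeasureTheory Set Filter Topology

theorem mul_le_apply_homothety_of_concaveOn {E : Type*} [NormedAddCommGroup E] [NormedSpace ℝ E]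
    [FiniteDimensional ℝ E] {s : Set E} {g : E → ℝ} (hs : IsOpen s) (hg : ConcaveOn ℝ s g)
    (hnn : ∀ y ∈ s, 0 ≤ g y) {x z : E} (hx : x ∈ s) (hz : z ∈ closure s) {k : ℝ} (hk : 0 < k)
    (hk1 : k ≤ 1) : k * g x ≤ g (homothety z k x) := by
  -- Moving the centre `z` to a nearby `z' ∈ s` and `x` to `x'` keeps the image point fixed.
  let x' : E → E := fun z' => x + ((1 - k) / k) • (z - z')
  have hx'z : x' z = x := by simp [x']
  have hx' : Tendsto x' (𝓝[s] z) (𝓝 x) := by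
    have : Continuous x' := by fun_prop
    simpa only [hx'z] using (this.tendsto z).mono_left nhdsWithin_le_nhds
  have hx's : ∀ᶠ z' in 𝓝[s] z, x' z' ∈ s := hx'.eventually (hs.mem_nhds hx)
  have himage (z' : E) : k • x' z' + (1 - k) • z' = homothety z k x := by
    simp only [x', homothety_apply, vsub_eq_sub, vadd_eq_add, smul_add, smul_smul,
      mul_div_cancel₀ _ hk.ne']
    module
  have hgx' : Tendsto (fun z' => k * g (x' z')) (𝓝[s] z) (𝓝 (k * g x)) :=
    (((hg.continuousOn hs).continuousAt (hs.mem_nhds hx)).tendsto.comp hx').const_mul k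
  have : (𝓝[s] z).NeBot := mem_closure_iff_nhdsWithin_neBot.1 hz
  refine le_of_tendsto hgx' ?_
  filter_upwards [hx's, self_mem_nhdsWithin] with z' hx's hz's
  have hconc := hg.2 hx's hz's hk.le (sub_nonneg.2 hk1) (by ring)
  rw [himage, smul_eq_mul, smul_eq_mul] at hconc
  linarith [mul_nonneg (sub_nonneg.2 hk1) (hnn z' hz's)]

section ConcaveOnIoo

variable {α β s : ℝ} {g : ℝ → ℝ}

theorem monotoneOn_div_sub_of_concaveOn (hg : ConcaveOn ℝ (Ioo α β) g)
    (hnn : ∀ t ∈ Ioo α β, 0 ≤ g t) : MonotoneOn (fun t => g t / (β - t)) (Ioo α β) := by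
  intro t ht u hu htu
  have hβt : 0 < β - t := sub_pos.2 ht.2
  have hβu : 0 < β - u := sub_pos.2 hu.2
  have hβ : β ∈ closure (Ioo α β) := by
    rw [closure_Ioo (ht.1.trans ht.2).ne]
    exact right_mem_Icc.2 (ht.1.trans ht.2).le
  have hu_eq : homothety β ((β - u) / (β - t)) t = u := by
    simp only [homothety_apply, vsub_eq_sub, vadd_eq_add, smul_eq_mul]
    field_simp
    ring
  have hle := mul_le_apply_homothety_of_concaveOn isOpen_Ioo hg hnn ht hβ (div_pos hβu hβt)
    ((div_le_one hβt).2 (by linarith))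
  rw [hu_eq] at hle
  rw [le_div_iff₀ hβu]
  exact (div_mul_comm _ _ _).trans_le hle

theorem le_two_mul_midpoint_of_concaveOn_s9 (hg : ConcaveOn ℝ (Ioo α β) g)
    (hnn : ∀ t ∈ Ioo α β, 0 ≤ g t) {t : ℝ} (ht : t ∈ Ioo α β) :
    g t ≤ 2 * g (midpoint ℝ α β) := by
  have hreflect : α + β - t ∈ Ioo α β := ⟨by linarith [ht.2], by linarith [ht.1]⟩
  have hconc := hg.2 ht hreflect (by norm_num : (0 : ℝ) ≤ 1 / 2) (by norm_num : (0 : ℝ) ≤ 1 / 2)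
    (by norm_num)
  have hmid : (1 / 2 : ℝ) • t + (1 / 2 : ℝ) • (α + β - t) = midpoint ℝ α β := by
    simp only [midpoint_eq_smul_add, smul_eq_mul, invOf_eq_inv]
    ring
  rw [hmid, smul_eq_mul, smul_eq_mul] at hconc
  linarith [hnn _ hreflect]

theorem intervalIntegrable_rpow_of_concaveOn_s9 (hg : ConcaveOn ℝ (Ioo α β) g)
    (hnn : ∀ t ∈ Ioo α β, 0 ≤ g t) (hαβ : α ≤ β) (hs : 0 ≤ s) :
    IntervalIntegrable (fun t => g t ^ s) volume α β := by
  rw [intervalIntegrable_iff_integrableOn_Ioo_of_le hαβ]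
  have hcont : ContinuousOn (fun t => g t ^ s) (Ioo α β) :=
    (hg.continuousOn isOpen_Ioo).rpow_const fun _ _ => Or.inr hs
  refine IntegrableOn.of_bound (by simp) (hcont.aestronglyMeasurable measurableSet_Ioo)
    ((2 * g (midpoint ℝ α β)) ^ s) ?_
  filter_upwards [ae_restrict_mem measurableSet_Ioo] with t ht
  rw [Real.norm_of_nonneg (Real.rpow_nonneg (hnn t ht) s)]
  exact Real.rpow_le_rpow (hnn t ht) (le_two_mul_midpoint_of_concaveOn_s9 hg hnn ht) hs

theorem integral_sub_centroid_mul_sub_rpow (hs : -1 < s) (hαβ : α ≤ β) :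
    ∫ t in α..β, (t - (α + (β - α) / (s + 2))) * (β - t) ^ s = 0 := by
  have hs2 : s + 2 ≠ 0 := by linarith
  have hderiv : ∀ t ∈ Ioo α β, HasDerivAt
      (fun t => -(s + 2)⁻¹ * ((t - α) * (β - t) ^ (s + 1)))
      ((t - (α + (β - α) / (s + 2))) * (β - t) ^ s) t := fun t ht => by
    have hβt : 0 < β - t := sub_pos.2 ht.2
    have hpow : HasDerivAt (fun t => (β - t) ^ (s + 1)) (-1 * (s + 1) * (β - t) ^ (s + 1 - 1)) t :=
      ((hasDerivAt_id' t).const_sub β).rpow_const (Or.inl hβt.ne')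
    refine ((((hasDerivAt_id' t).sub_const α).mul hpow).const_mul (-(s + 2)⁻¹)).congr_deriv ?_
    simp only [add_sub_cancel_right, Real.rpow_add hβt, Real.rpow_one]
    field_simp
    ring
  have hcont : Continuous fun t => -(s + 2)⁻¹ * ((t - α) * (β - t) ^ (s + 1)) := by
    have : Continuous fun t : ℝ => (β - t) ^ (s + 1) :=
      (continuous_const.sub continuous_id).rpow_const fun _ => Or.inr (by linarith)
    fun_prop
  have hint : IntervalIntegrable (fun t => (β - t) ^ s) volume α β := by
    simpa using (intervalIntegral.intervalIntegrable_rpow' (a := β - α) (b := 0) hs).comp_sub_left β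
  rw [intervalIntegral.integral_eq_sub_of_hasDerivAt_of_le hαβ hcont.continuousOn hderiv
    (hint.continuousOn_mul (by fun_prop)), sub_self, sub_self,
    Real.zero_rpow (by linarith : s + 1 ≠ 0)]
  simp only [mul_zero, zero_mul, sub_zero]

theorem sub_mul_rpow_le_of_concaveOn (hg : ConcaveOn ℝ (Ioo α β) g)
    (hnn : ∀ t ∈ Ioo α β, 0 ≤ g t) (hs : 0 ≤ s) {c t : ℝ} (hc : c ∈ Ioo α β) (ht : t ∈ Ioo α β) :
    (t - c) * (g c / (β - c) * (β - t)) ^ s ≤ (t - c) * g t ^ s := by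
  have hβt : 0 < β - t := sub_pos.2 ht.2
  have hmono := monotoneOn_div_sub_of_concaveOn hg hnn
  rcases le_total t c with htc | hct
  · have hle : g t ≤ g c / (β - c) * (β - t) := (div_le_iff₀ hβt).1 (hmono ht hc htc)
    exact mul_le_mul_of_nonpos_left (Real.rpow_le_rpow (hnn t ht) hle hs) (sub_nonpos.2 htc)
  · have hle : g c / (β - c) * (β - t) ≤ g t := (le_div_iff₀ hβt).1 (hmono hc ht hct)
    have hnonneg : 0 ≤ g c / (β - c) * (β - t) :=
      mul_nonneg (div_nonneg (hnn c hc) (sub_pos.2 hc.2).le) hβt.le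
    exact mul_le_mul_of_nonneg_left (Real.rpow_le_rpow hnonneg hle hs) (sub_nonneg.2 hct)

theorem centroid_mul_integral_rpow_le_of_concaveOn (hg : ConcaveOn ℝ (Ioo α β) g)
    (hnn : ∀ t ∈ Ioo α β, 0 ≤ g t) (hαβ : α < β) (hs : 0 ≤ s) :
    (α + (β - α) / (s + 2)) * ∫ t in α..β, g t ^ s ≤ ∫ t in α..β, t * g t ^ s := by
  have hint := intervalIntegrable_rpow_of_concaveOn_s9 hg hnn hαβ.le hs
  set c := α + (β - α) / (s + 2) with hc
  have hcm : c ∈ Ioo α β := by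
    have hpos : 0 < (β - α) / (s + 2) := div_pos (sub_pos.2 hαβ) (by linarith)
    have hlt : (β - α) / (s + 2) < β - α := div_lt_self (sub_pos.2 hαβ) (by linarith)
    exact ⟨by linarith, by linarith⟩
  set m := g c / (β - c)
  have hm : 0 ≤ m := div_nonneg (hnn c hcm) (sub_pos.2 hcm.2).le
  have hcont : Continuous fun t => m ^ s * ((t - c) * (β - t) ^ s) := by
    have : Continuous fun t : ℝ => (β - t) ^ s :=
      (continuous_const.sub continuous_id).rpow_const fun _ => Or.inr hs
    fun_prop
  have hcross : ∀ t ∈ Ioo α β, m ^ s * ((t - c) * (β - t) ^ s) ≤ (t - c) * g t ^ s := fun t ht => by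
    rw [mul_left_comm, ← Real.mul_rpow hm (sub_pos.2 ht.2).le]
    exact sub_mul_rpow_le_of_concaveOn hg hnn hs hcm ht
  have hmoment : 0 ≤ ∫ t in α..β, (t - c) * g t ^ s := calc
    0 = ∫ t in α..β, m ^ s * ((t - c) * (β - t) ^ s) := by
      rw [intervalIntegral.integral_const_mul, hc,
        integral_sub_centroid_mul_sub_rpow (by linarith) hαβ.le, mul_zero]
    _ ≤ ∫ t in α..β, (t - c) * g t ^ s :=
      intervalIntegral.integral_mono_on_of_le_Ioo hαβ.le (hcont.intervalIntegrable _ _)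
        (hint.continuousOn_mul (by fun_prop)) hcross
  simp only [sub_mul] at hmoment
  rwa [intervalIntegral.integral_sub (hint.continuousOn_mul (by fun_prop)) (hint.const_mul c),
    intervalIntegral.integral_const_mul, sub_nonneg] at hmoment

theorem rpow_mul_integral_rpow_le_of_concaveOn_s9 (hg : ConcaveOn ℝ (Ioo α β) g)
    (hnn : ∀ t ∈ Ioo α β, 0 ≤ g t) (hαβ : α < β) (hs : 0 ≤ s) {k : ℝ} (hk : 0 < k) (hk1 : k ≤ 1) :
    k ^ (s + 1) * ∫ t in α..β, g t ^ s ≤ ∫ t in α..(α + k * (β - α)), g t ^ s := by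
  have hα : α ∈ closure (Ioo α β) := by
    rw [closure_Ioo hαβ.ne]
    exact left_mem_Icc.2 hαβ.le
  have hmaps : MapsTo (homothety α k) (Ioo α β) (Ioo α β) := fun t ht => by
    simp only [homothety_apply, vsub_eq_sub, vadd_eq_add, smul_eq_mul]
    have hpos : 0 < k * (t - α) := mul_pos hk (sub_pos.2 ht.1)
    have hle : k * (t - α) ≤ t - α := mul_le_of_le_one_left (sub_pos.2 ht.1).le hk1
    exact ⟨by linarith, by linarith [ht.2]⟩
  have hg' : ConcaveOn ℝ (Ioo α β) (g ∘ homothety α k) :=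
    (hg.comp_affineMap (homothety α k)).subset hmaps (convex_Ioo α β)
  have hle : ∀ t ∈ Ioo α β, k ^ s * g t ^ s ≤ (g ∘ homothety α k) t ^ s := fun t ht => by
    rw [← Real.mul_rpow hk.le (hnn t ht)]
    exact Real.rpow_le_rpow (mul_nonneg hk.le (hnn t ht))
      (mul_le_apply_homothety_of_concaveOn isOpen_Ioo hg hnn ht hα hk hk1) hs
  have hmono : k ^ s * ∫ t in α..β, g t ^ s ≤ ∫ t in α..β, (g ∘ homothety α k) t ^ s := by
    rw [← intervalIntegral.integral_const_mul]
    exact intervalIntegral.integral_mono_on_of_le_Ioo hαβ.le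
      ((intervalIntegrable_rpow_of_concaveOn_s9 hg hnn hαβ.le hs).const_mul _)
      (intervalIntegrable_rpow_of_concaveOn_s9 hg' (fun t ht => hnn _ (hmaps ht)) hαβ.le hs) hle
  calc k ^ (s + 1) * ∫ t in α..β, g t ^ s
      = k * (k ^ s * ∫ t in α..β, g t ^ s) := by
        rw [Real.rpow_add hk, Real.rpow_one, mul_comm (k ^ s), mul_assoc]
    _ ≤ k * ∫ t in α..β, (g ∘ homothety α k) t ^ s := mul_le_mul_of_nonneg_left hmono hk.le
    _ = k * ∫ t in α..β, g (k * t + (α - k * α)) ^ s := by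
        simp only [Function.comp_apply, homothety_apply, vsub_eq_sub, vadd_eq_add, smul_eq_mul,
          mul_sub, sub_add_eq_add_sub, add_sub_assoc]
    _ = ∫ t in α..(α + k * (β - α)), g t ^ s := by
        rw [intervalIntegral.mul_integral_comp_mul_add (f := fun t => g t ^ s)]
        congr 1 <;> ring

end ConcaveOnIoo

section RpowConcaveOn

variable {α β p r : ℝ} {f : ℝ → ℝ}

theorem le_centroid_of_concaveOn_rpow (hαβ : α < β) (hp : 0 < p) (hr : 0 ≤ r)
    (hpos : ∀ t ∈ Ioo α β, 0 < f t) (hconc : ConcaveOn ℝ (Ioo α β) fun t => f t ^ p) :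
    α + p / (2 * p + r) * (β - α) ≤ (∫ t in α..β, t * f t ^ r) / ∫ t in α..β, f t ^ r := by
  have hnn : ∀ t ∈ Ioo α β, 0 ≤ f t ^ p := fun t ht => Real.rpow_nonneg (hpos t ht).le p
  have hs : 0 ≤ r / p := div_nonneg hr hp.le
  have hpow : EqOn (fun t => (f t ^ p) ^ (r / p)) (fun t => f t ^ r) (Ioo α β) := fun t ht => by
    simp only [← Real.rpow_mul (hpos t ht).le, mul_div_cancel₀ _ hp.ne']
  have hint : IntervalIntegrable (fun t => f t ^ r) volume α β :=
    (intervalIntegrable_rpow_of_concaveOn_s9 hconc hnn hαβ.le hs).congr_uIoo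
      (by rwa [uIoo_of_le hαβ.le])
  have hintpos : 0 < ∫ t in α..β, f t ^ r :=
    intervalIntegral.intervalIntegral_pos_of_pos_on hint
      (fun t ht => Real.rpow_pos_of_pos (hpos t ht) r) hαβ
  have hcoef : (β - α) / (r / p + 2) = p / (2 * p + r) * (β - α) := by
    field_simp
    ring
  have hmoment := centroid_mul_integral_rpow_le_of_concaveOn hconc hnn hαβ hs
  rw [hcoef, intervalIntegral.integral_congr_Ioo_of_le hαβ.le hpow,
    intervalIntegral.integral_congr_Ioo_of_le hαβ.le
      fun t ht => congrArg (t * ·) (hpow ht)] at hmoment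
  exact (le_div_iff₀ hintpos).2 hmoment

theorem rpow_mul_integral_le_of_concaveOn_rpow (hαβ : α < β) (hp : 0 < p)
    (hnn : ∀ t ∈ Ioo α β, 0 ≤ f t) (hconc : ConcaveOn ℝ (Ioo α β) fun t => f t ^ p)
    {k : ℝ} (hk : 0 < k) (hk1 : k ≤ 1) :
    k ^ ((p + 1) / p) * ∫ t in α..β, f t ≤ ∫ t in α..(α + k * (β - α)), f t := by
  have hroot : EqOn (fun t => (f t ^ p) ^ p⁻¹) f (Ioo α β) := fun t ht =>
    Real.rpow_rpow_inv (hnn t ht) hp.ne'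
  have hlen : k * (β - α) ≤ β - α := mul_le_of_le_one_left (sub_pos.2 hαβ).le hk1
  have hlen0 : 0 ≤ k * (β - α) := mul_nonneg hk.le (sub_pos.2 hαβ).le
  have hexp : (p + 1) / p = p⁻¹ + 1 := by
    field_simp
    ring
  have hle := rpow_mul_integral_rpow_le_of_concaveOn_s9 hconc
    (fun t ht => Real.rpow_nonneg (hnn t ht) p) hαβ (inv_nonneg.2 hp.le) hk hk1
  rwa [← hexp, intervalIntegral.integral_congr_Ioo_of_le hαβ.le hroot,
    intervalIntegral.integral_congr_Ioo_of_le (by linarith)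
      (hroot.mono (Ioo_subset_Ioo_right (by linarith)))] at hle

end RpowConcaveOn

section Support

variable {a b α β : ℝ}

theorem intervalIntegral_eq_of_forall_sdiff_Icc_eq_zero {E : Type*} [NormedAddCommGroup E]
    [NormedSpace ℝ E] {F : ℝ → E} (haα : a ≤ α) (hαβ : α ≤ β) (hβb : β ≤ b)
    (hF : ∀ t ∈ Icc a b \ Icc α β, F t = 0) : ∫ t in a..b, F t = ∫ t in α..β, F t := by
  rw [intervalIntegral.integral_of_le (haα.trans (hαβ.trans hβb)),
    intervalIntegral.integral_of_le hαβ, ← integral_Icc_eq_integral_Ioc,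
    ← integral_Icc_eq_integral_Ioc]
  exact setIntegral_eq_of_subset_of_forall_sdiff_eq_zero measurableSet_Icc
    (Icc_subset_Icc haα hβb) hF

theorem exists_Ioo_pos_of_ordConnected_support {f : ℝ → ℝ} (hab : a ≤ b)
    (hnn : ∀ t ∈ Icc a b, 0 ≤ f t) (hsupp : (Icc a b ∩ {t | 0 < f t}).OrdConnected)
    (hint : 0 < ∫ t in a..b, f t) :
    ∃ α β, a ≤ α ∧ α < β ∧ β ≤ b ∧ (Ioo α β ⊆ Icc a b ∩ {t | 0 < f t}) ∧
      ∀ t ∈ Icc a b \ Icc α β, f t = 0 := by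
  set S := Icc a b ∩ {t | 0 < f t}
  have hzero : ∀ t ∈ Icc a b, t ∉ S → f t = 0 := fun t ht hn =>
    le_antisymm (not_lt.1 fun h => hn ⟨ht, h⟩) (hnn t ht)
  have hne : S.Nonempty := by
    by_contra! hempty
    refine hint.ne' (intervalIntegral.integral_zero_ae (ae_of_all _ fun t ht => ?_))
    rw [uIoc_of_le hab] at ht
    exact hzero t (Ioc_subset_Icc_self ht) (hempty ▸ notMem_empty t)
  have hbelow : BddBelow S := ⟨a, fun t ht => ht.1.1⟩
  have habove : BddAbove S := ⟨b, fun t ht => ht.1.2⟩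
  have haα : a ≤ sInf S := le_csInf hne fun t ht => ht.1.1
  have hβb : sSup S ≤ b := csSup_le hne fun t ht => ht.1.2
  have hle : sInf S ≤ sSup S := csInf_le_csSup hne hbelow habove
  have hvanish : ∀ t ∈ Icc a b \ Icc (sInf S) (sSup S), f t = 0 := fun t ht =>
    hzero t ht.1 fun h => ht.2 (subset_Icc_csInf_csSup hbelow habove h)
  have hlt : sInf S < sSup S := hle.lt_of_ne fun h => by
    rw [intervalIntegral_eq_of_forall_sdiff_Icc_eq_zero haα hle hβb hvanish, h,
      intervalIntegral.integral_same] at hint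
    exact hint.false
  exact ⟨sInf S, sSup S, haα, hlt, hβb,
    IsConnected.Ioo_csInf_csSup_subset ⟨hne, hsupp.isPreconnected⟩ hbelow habove, hvanish⟩

end Support

theorem stmt_9_general {a b p r x : ℝ} {f : ℝ → ℝ} (hx : x ∈ Icc a b) (hp : 0 < p) (hr : 0 < r)
    (hnn : ∀ t ∈ Icc a b, 0 ≤ f t)
    (hconc : ConcaveOn ℝ (Icc a b ∩ {t | 0 < f t}) (fun t => f t ^ p))
    (hint : 0 < ∫ t in a..b, f t)
    (hcent : (∫ t in a..b, t * f t ^ r) / (∫ t in a..b, f t ^ r) ≤ x) :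
    (p / (2 * p + r)) ^ ((p + 1) / p) ≤ (∫ t in a..x, f t) / (∫ t in a..b, f t) := by
  obtain ⟨α, β, haα, hαβ, hβb, hpos, hzero⟩ := exists_Ioo_pos_of_ordConnected_support
    (hx.1.trans hx.2) hnn hconc.1.ordConnected hint
  have hrestrict {F : ℝ → ℝ} (hF : ∀ t, f t = 0 → F t = 0) :
      ∫ t in a..b, F t = ∫ t in α..β, F t :=
    intervalIntegral_eq_of_forall_sdiff_Icc_eq_zero haα hαβ.le hβb fun t ht => hF t (hzero t ht)
  have hconc' := hconc.subset hpos (convex_Ioo α β)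
  set k := p / (2 * p + r)
  have hk : 0 < k := by positivity
  have hk1 : k ≤ 1 := (div_le_one (by positivity)).2 (by linarith)
  have hcx : α + k * (β - α) ≤ x := by
    rw [hrestrict fun t ht => by rw [ht, Real.zero_rpow hr.ne', mul_zero],
      hrestrict fun t ht => by rw [ht, Real.zero_rpow hr.ne']] at hcent
    exact (le_centroid_of_concaveOn_rpow hαβ hp hr.le (fun t ht => (hpos ht).2) hconc').trans hcent
  have hnn' : 0 ≤ᵐ[volume.restrict (Ioc a x)] f :=
    ae_restrict_of_forall_mem measurableSet_Ioc fun t ht => hnn t ⟨ht.1.le, ht.2.trans hx.2⟩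
  have hfx : IntervalIntegrable f volume a x :=
    (intervalIntegral.intervalIntegrable_of_integral_ne_zero hint.ne').mono_set
      (by rw [uIcc_of_le hx.1, uIcc_of_le (hx.1.trans hx.2)]; exact Icc_subset_Icc_right hx.2)
  rw [le_div_iff₀ hint, hrestrict fun t ht => ht]
  exact (rpow_mul_integral_le_of_concaveOn_rpow hαβ hp (fun t ht => (hpos ht).2.le) hconc' hk
    hk1).trans (intervalIntegral.integral_mono_interval haα
      (le_add_of_nonneg_right (mul_nonneg hk.le (sub_pos.2 hαβ).le)) hcx hnn' hfx)

theorem stmt_9 (a b p r : ℝ) (f : ℝ → ℝ) (ha : a < 0) (hb : 0 < b)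
    (hp : 0 < p) (hr : 0 < r)
    (hnn : ∀ t ∈ Set.Icc a b, 0 ≤ f t)
    (hconc : ConcaveOn ℝ (Set.Icc a b ∩ {t | 0 < f t}) (fun t => f t ^ p))
    (hint : 0 < ∫ t in a..b, f t)
    (hcent : (∫ t in a..b, t * f t ^ r) / (∫ t in a..b, f t ^ r) = 0) :
    (∫ t in a..(0 : ℝ), f t) / (∫ t in a..b, f t) ≥
      (p / (2 * p + r)) ^ ((p + 1) / p) :=
  stmt_9_general ⟨ha.le, hb.le⟩ hp hr hnn hconc hint hcent.le
end
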